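/- arXiv:1610.08861 — 9 statements merged into one kernel-verified Lean document; each statement's English description precedes it below -/
import Mathlib

section
/- Let k : ℝ → ℝ be a continuous, even function taking values in [0,1] with k(0) = 1, lim_{r→∞} k(r) = 0, and k convex on [0,∞). Then there exists a probability measure μ on ℝ with μ((−∞,0]) = 0 such that k(r) = ∫₀^∞ max{0, 1 − |r|/x} dμ(x) for every r ∈ ℝ. -/
open MeasureTheory Filter

/-!
The function `G t = t * k t⁻¹`, extended by zero to `t ≤ 0`, is convex on `ℝ`, so its right
derivative is the distribution function of a measure `ν`. Since `G` is flat at `0`, Taylor's formula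
with integral remainder reads `G b = ∫ y in Ioc 0 b, (b - y) ∂ν`; dividing by `b = r⁻¹` turns this
into `k r = ∫ max 0 (1 - r * y) ∂ν`, so that the image of `ν` under `y ↦ y⁻¹` represents `k`. The
total mass of `ν` is the asymptotic slope of `G`, which is `k 0`.
-/

open Set Topology

variable {f : ℝ → ℝ}

theorem continuousWithinAt_rightDeriv_of_convexOn {S : Set ℝ} {x : ℝ} (hf : ConvexOn ℝ S f)
    (hx : x ∈ interior S) :
    ContinuousWithinAt (fun y ↦ derivWithin f (Ioi y) y) (Ioi x) x := by
  have near_interior : ∀ᶠ y in 𝓝 x, y ∈ interior S := isOpen_interior.mem_nhds hx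
  refine tendsto_order.2 ⟨fun c hc ↦ ?_, fun c hc ↦ ?_⟩
  · filter_upwards [self_mem_nhdsWithin, nhdsWithin_le_nhds near_interior] with y hxy hy
    exact hc.trans_le (hf.monotoneOn_rightDeriv hx hy (le_of_lt hxy))
  · have slope_tendsto : Tendsto (slope f x) (𝓝[>] x) (𝓝 (derivWithin f (Ioi x) x)) :=
      (hasDerivWithinAt_iff_tendsto_slope' self_notMem_Ioi).1
        (hf.hasDerivWithinAt_rightDeriv_of_mem_interior hx)
    obtain ⟨z, ⟨hzc, hz⟩, hxz⟩ : ∃ z, (slope f x z < c ∧ z ∈ interior S) ∧ x < z :=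
      (((slope_tendsto.eventually_lt_const hc).and
        (near_interior.filter_mono nhdsWithin_le_nhds)).and self_mem_nhdsWithin).exists
    have slope_lt : ∀ᶠ y in 𝓝 x, slope f y z < c := by
      have : ContinuousAt (fun y ↦ slope f y z) x := by
        have hfx : ContinuousAt f x :=
          hf.continuousOn_interior.continuousAt (isOpen_interior.mem_nhds hx)
        simp only [slope_def_field]
        exact (continuousAt_const.sub hfx).div (by fun_prop) (sub_ne_zero.2 hxz.ne')
      exact this.eventually_lt_const hzc
    filter_upwards [nhdsWithin_le_nhds slope_lt, nhdsWithin_le_nhds near_interior,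
      nhdsWithin_le_nhds (Iio_mem_nhds hxz)] with y hyc hy hyz
    exact (hf.rightDeriv_le_slope_of_mem_interior hy (interior_subset hz) hyz).trans_lt hyc

/-- The right derivative of a convex function on `ℝ` as a Stieltjes function; the associated measure
is the second derivative of `f` in the sense of distributions. -/
noncomputable def rightDerivStieltjes (hf : ConvexOn ℝ univ f) : StieltjesFunction ℝ where
  toFun x := derivWithin f (Ioi x) x
  mono' := by simpa only [interior_univ, monotoneOn_univ] using hf.monotoneOn_rightDeriv
  right_continuous' x := continuousWithinAt_Ioi_iff_Ici.1
    (continuousWithinAt_rightDeriv_of_convexOn hf (by simp only [interior_univ, mem_univ]))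

theorem hasDerivWithinAt_rightDerivStieltjes (hf : ConvexOn ℝ univ f) (x : ℝ) :
    HasDerivWithinAt f (rightDerivStieltjes hf x) (Ioi x) x :=
  hf.hasDerivWithinAt_rightDeriv_of_mem_interior (by simp only [interior_univ, mem_univ])

theorem tendsto_rightDerivStieltjes_atTop (hf : ConvexOn ℝ univ f) {l : ℝ}
    (hl : Tendsto (fun x ↦ f x / x) atTop (𝓝 l)) :
    Tendsto (rightDerivStieltjes hf) atTop (𝓝 l) := by
  have lower : Tendsto (slope f 0) atTop (𝓝 l) := by
    have := hl.sub ((tendsto_const_nhds (x := f 0)).div_atTop tendsto_id)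
    simpa only [slope_fun_def_field, sub_zero, sub_div, id_eq] using this
  have upper : Tendsto (fun x ↦ slope f x (2 * x)) atTop (𝓝 l) := by
    have h2 : Tendsto (fun x : ℝ ↦ f (2 * x) / (2 * x)) atTop (𝓝 l) :=
      hl.comp (tendsto_id.const_mul_atTop two_pos)
    have := (h2.const_mul 2).sub hl
    rw [two_mul, add_sub_cancel_right] at this
    refine this.congr' ?_
    filter_upwards [eventually_gt_atTop 0] with x hx
    rw [slope_def_field]
    field_simp
    ring
  refine tendsto_of_tendsto_of_tendsto_of_le_of_le' lower upper ?_ ?_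
  · filter_upwards [eventually_gt_atTop 0] with x hx
    have hx' : x ∈ interior univ := by simp only [interior_univ, mem_univ]
    exact (hf.slope_le_leftDeriv_of_mem_interior (mem_univ 0) hx' hx).trans
      (hf.leftDeriv_le_rightDeriv_of_mem_interior hx')
  · filter_upwards [eventually_gt_atTop 0] with x hx
    exact hf.rightDeriv_le_slope_of_mem_interior (by simp only [interior_univ, mem_univ])
      (mem_univ _) (by linarith)

theorem setIntegral_Ioc_sub_stieltjes (F : StieltjesFunction ℝ) {a b : ℝ} (hab : a ≤ b) :
    ∫ y in Ioc a b, (b - y) ∂F.measure = ∫ u in a..b, (F u - F a) := by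
  have integrable : IntegrableOn (fun y ↦ b - y) (Ioc a b) F.measure :=
    (continuous_const.sub continuous_id).integrableOn_Ioc
  have nonneg : ∀ᵐ y ∂F.measure.restrict (Ioc a b), 0 ≤ b - y := by
    filter_upwards [ae_restrict_mem measurableSet_Ioc] with y hy using sub_nonneg.2 hy.2
  have le : ∀ᵐ y ∂F.measure.restrict (Ioc a b), b - y ≤ b - a := by
    filter_upwards [ae_restrict_mem measurableSet_Ioc] with y hy using sub_le_sub_left hy.1.le b
  have superlevel : ∀ t ∈ Ioc 0 (b - a),
      (F.measure.restrict (Ioc a b)).real {y | t ≤ b - y} = F (b - t) - F a := by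
    intro t ht
    have : {y | t ≤ b - y} ∩ Ioc a b = Ioc a (b - t) := by
      ext y
      simp only [mem_inter_iff, mem_ofPred_eq, mem_Ioc]
      constructor
      · rintro ⟨h, hay, -⟩; exact ⟨hay, by linarith⟩
      · rintro ⟨hay, h⟩; exact ⟨by linarith, hay, by linarith [ht.1]⟩
    rw [measureReal_restrict_apply' measurableSet_Ioc, this, measureReal_def, F.measure_Ioc,
      ENNReal.toReal_ofReal (sub_nonneg.2 (F.mono (by linarith [ht.2])))]
  calc ∫ y in Ioc a b, (b - y) ∂F.measure
      = ∫ t in Ioc 0 (b - a), (F (b - t) - F a) := by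
        rw [integrable.integral_eq_integral_Ioc_meas_le nonneg le]
        exact setIntegral_congr_fun measurableSet_Ioc superlevel
    _ = ∫ t in (0)..(b - a), (F (b - t) - F a) :=
        (intervalIntegral.integral_of_le (sub_nonneg.2 hab)).symm
    _ = ∫ u in a..b, (F u - F a) := by
        rw [intervalIntegral.integral_comp_sub_left (fun u ↦ F u - F a), sub_sub_cancel, sub_zero]

theorem setIntegral_Ioc_sub_rightDerivStieltjes (hf : ConvexOn ℝ univ f) {a b : ℝ} (hab : a ≤ b) :
    ∫ y in Ioc a b, (b - y) ∂(rightDerivStieltjes hf).measure =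
      f b - f a - rightDerivStieltjes hf a * (b - a) := by
  have intervalIntegrable : IntervalIntegrable (rightDerivStieltjes hf) volume a b :=
    (rightDerivStieltjes hf).mono.intervalIntegrable
  rw [setIntegral_Ioc_sub_stieltjes _ hab,
    intervalIntegral.integral_sub intervalIntegrable intervalIntegrable_const,
    intervalIntegral.integral_eq_sub_of_hasDeriv_right_of_le hab
      ((hf.continuousOn isOpen_univ).mono (subset_univ _))
      (fun x _ ↦ hasDerivWithinAt_rightDerivStieltjes hf x) intervalIntegrable,
    intervalIntegral.integral_const, smul_eq_mul, mul_comm (b - a)]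

theorem antitoneOn_Ici_of_convexOn_of_le {a C : ℝ} (hf : ConvexOn ℝ (Ici a) f)
    (hC : ∀ x ∈ Ici a, f x ≤ C) : AntitoneOn f (Ici a) := by
  intro x hx y hy hxy
  rcases hxy.eq_or_lt with rfl | hxy
  · rfl
  have secant_tendsto : Tendsto (fun z ↦ (C - f x) / (z - x)) atTop (𝓝 0) :=
    tendsto_const_nhds.div_atTop (tendsto_atTop_add_const_right _ (-x) tendsto_id)
  have slope_le : ∀ᶠ z in atTop, (f y - f x) / (y - x) ≤ (C - f x) / (z - x) := by
    filter_upwards [eventually_ge_atTop y] with z hyz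
    have hxz : x < z := hxy.trans_le hyz
    have hz : z ∈ Ici a := hx.trans hxz.le
    calc (f y - f x) / (y - x) ≤ (f z - f x) / (z - x) :=
          hf.secant_mono hx hy hz hxy.ne' hxz.ne' hyz
      _ ≤ (C - f x) / (z - x) := by
          have := hC z hz
          have := sub_pos.2 hxz
          gcongr
  have slope_nonpos : (f y - f x) / (y - x) ≤ 0 := ge_of_tendsto secant_tendsto slope_le
  rw [div_le_iff₀ (sub_pos.2 hxy), zero_mul] at slope_nonpos
  exact sub_nonpos.1 slope_nonpos

/-- The perspective `(x, t) ↦ t * f (x / t)` of `f` along the line `x = 1`, extended by zero to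
`t ≤ 0`. -/
noncomputable def perspective (f : ℝ → ℝ) (t : ℝ) : ℝ := max t 0 * f (max t 0)⁻¹

theorem perspective_of_nonpos {t : ℝ} (ht : t ≤ 0) : perspective f t = 0 := by
  rw [perspective, max_eq_right ht, zero_mul]

theorem perspective_of_nonneg {t : ℝ} (ht : 0 ≤ t) : perspective f t = t * f t⁻¹ := by
  rw [perspective, max_eq_left ht]

theorem convexOn_mul_comp_inv (hf : ConvexOn ℝ (Ici 0) f) (hanti : AntitoneOn f (Ici 0)) :
    ConvexOn ℝ (Ici 0) fun t ↦ t * f t⁻¹ := by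
  refine ⟨convex_Ici 0, fun x (hx : 0 ≤ x) y (hy : 0 ≤ y) a b ha hb hab ↦ ?_⟩
  simp only [smul_eq_mul]
  set z := a * x + b * y with hz
  have hax : 0 ≤ a * x := by positivity
  have hby : 0 ≤ b * y := by positivity
  rcases (add_nonneg hax hby).eq_or_lt with hz0 | hz0
  · have hax0 : a * x = 0 := by linarith
    have hby0 : b * y = 0 := by linarith
    rw [← mul_assoc, ← mul_assoc, hz, hax0, hby0]
    simp only [add_zero, zero_mul, le_refl]
  -- Equality holds here unless `x` or `y` vanishes; `0⁻¹ = 0` is why monotonicity is needed.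
  have combination_le : a * x / z * x⁻¹ + b * y / z * y⁻¹ ≤ z⁻¹ := by
    calc a * x / z * x⁻¹ + b * y / z * y⁻¹ = (a * (x * x⁻¹) + b * (y * y⁻¹)) / z := by ring
      _ ≤ (a * 1 + b * 1) / z := by gcongr <;> exact mul_inv_le_one
      _ = z⁻¹ := by rw [mul_one, mul_one, hab, one_div]
  have combination_nonneg : 0 ≤ a * x / z * x⁻¹ + b * y / z * y⁻¹ := by positivity
  calc z * f z⁻¹
      ≤ z * f (a * x / z * x⁻¹ + b * y / z * y⁻¹) := by
        gcongr
        exact hanti combination_nonneg (inv_nonneg.2 hz0.le) combination_le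
    _ ≤ z * (a * x / z * f x⁻¹ + b * y / z * f y⁻¹) := by
        gcongr
        exact hf.2 (inv_nonneg.2 hx) (inv_nonneg.2 hy) (by positivity) (by positivity)
          (by rw [← add_div, div_self hz0.ne'])
    _ = z / z * (a * (x * f x⁻¹) + b * (y * f y⁻¹)) := by ring
    _ = a * (x * f x⁻¹) + b * (y * f y⁻¹) := by rw [div_self hz0.ne', one_mul]

theorem monotoneOn_mul_comp_inv (hanti : AntitoneOn f (Ici 0)) (hnonneg : ∀ x ∈ Ici 0, 0 ≤ f x) :
    MonotoneOn (fun t ↦ t * f t⁻¹) (Ici 0) := by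
  intro x (hx : 0 ≤ x) y (hy : 0 ≤ y) hxy
  rcases hx.eq_or_lt with rfl | hx0
  · simpa only [zero_mul] using mul_nonneg hy (hnonneg _ (inv_nonneg.2 hy))
  · have : f x⁻¹ ≤ f y⁻¹ :=
      hanti (inv_nonneg.2 hy) (inv_nonneg.2 hx) (inv_anti₀ hx0 hxy)
    exact mul_le_mul hxy this (hnonneg _ (inv_nonneg.2 hx)) hy

theorem convexOn_perspective (hf : ConvexOn ℝ (Ici 0) f) (hanti : AntitoneOn f (Ici 0))
    (hnonneg : ∀ x ∈ Ici 0, 0 ≤ f x) : ConvexOn ℝ univ (perspective f) := by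
  have image_eq : (fun t : ℝ ↦ max t 0) '' univ = Ici 0 :=
    (image_subset_iff.2 fun t _ ↦ le_max_right t 0).antisymm
      fun t ht ↦ ⟨t, mem_univ t, max_eq_left ht⟩
  have convexOn_posPart : ConvexOn ℝ univ fun t : ℝ ↦ max t 0 :=
    (convexOn_id convex_univ).sup (convexOn_const 0 convex_univ)
  exact ConvexOn.comp (g := fun t ↦ t * f t⁻¹)
    (image_eq ▸ convexOn_mul_comp_inv hf hanti) convexOn_posPart
    (image_eq ▸ monotoneOn_mul_comp_inv hanti hnonneg)

theorem tendsto_perspective_div_nhdsGT_zero {l : ℝ} (hl : Tendsto f atTop (𝓝 l)) :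
    Tendsto (fun t ↦ perspective f t / t) (𝓝[>] 0) (𝓝 l) := by
  refine (hl.comp tendsto_inv_nhdsGT_zero).congr' ?_
  filter_upwards [self_mem_nhdsWithin] with t (ht : 0 < t)
  rw [perspective_of_nonneg ht.le, mul_div_cancel_left₀ _ ht.ne', Function.comp_apply]

theorem tendsto_perspective_div_atTop (hf : ContinuousWithinAt f (Ioi 0) 0) :
    Tendsto (fun t ↦ perspective f t / t) atTop (𝓝 (f 0)) := by
  refine (hf.tendsto.comp tendsto_inv_atTop_nhdsGT_zero).congr' ?_
  filter_upwards [eventually_gt_atTop 0] with t ht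
  rw [perspective_of_nonneg ht.le, mul_div_cancel_left₀ _ ht.ne', Function.comp_apply]

theorem hasDerivWithinAt_perspective_of_nonpos (hlim : Tendsto f atTop (𝓝 0)) {t : ℝ}
    (ht : t ≤ 0) : HasDerivWithinAt (perspective f) 0 (Ioi t) t := by
  rcases ht.eq_or_lt with rfl | ht
  · refine (hasDerivWithinAt_iff_tendsto_slope' self_notMem_Ioi).2 ?_
    simpa only [slope_fun_def_field, perspective_of_nonpos le_rfl, sub_zero] using
      tendsto_perspective_div_nhdsGT_zero hlim
  · have : perspective f =ᶠ[𝓝 t] fun _ ↦ 0 := by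
      filter_upwards [Iio_mem_nhds ht] with s hs using perspective_of_nonpos (le_of_lt hs)
    exact ((hasDerivAt_const t 0).congr_of_eventuallyEq this).hasDerivWithinAt

theorem setIntegral_Ioi_max_one_sub_div_map_inv (ν : Measure ℝ) {r : ℝ} (hr : 0 < r) :
    ∫ x in Ioi 0, max 0 (1 - r / x) ∂ν.map (·⁻¹) = r * ∫ y in Ioc 0 r⁻¹, (r⁻¹ - y) ∂ν := by
  have kernel_eq : ∀ y ∈ Ioc 0 r⁻¹, max 0 (1 - r / y⁻¹) = r * (r⁻¹ - y) := by
    intro y hy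
    have : r * y ≤ 1 := (le_inv_mul_iff₀ hr).1 (by simpa only [mul_one] using hy.2)
    rw [div_inv_eq_mul, max_eq_right (sub_nonneg.2 this), mul_sub, mul_inv_cancel₀ hr.ne']
  have kernel_eq_zero : ∀ y ∈ Ioi 0 \ Ioc 0 r⁻¹, max 0 (1 - r / y⁻¹) = 0 := by
    rintro y ⟨hy, hy'⟩
    have : 1 ≤ r * y := (inv_mul_le_iff₀ hr).1
      (by simpa only [mul_one] using (not_le.1 fun h ↦ hy' ⟨hy, h⟩).le)
    rw [div_inv_eq_mul, max_eq_left (sub_nonpos.2 this)]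
  calc ∫ x in Ioi 0, max 0 (1 - r / x) ∂ν.map (·⁻¹)
      = ∫ y in (·⁻¹) ⁻¹' Ioi 0, max 0 (1 - r / y⁻¹) ∂ν :=
        setIntegral_map measurableSet_Ioi
          (by fun_prop : Measurable fun x : ℝ ↦ max 0 (1 - r / x)).aestronglyMeasurable
          measurable_inv.aemeasurable
    _ = ∫ y in Ioi 0, max 0 (1 - r / y⁻¹) ∂ν := by
        have : (·⁻¹) ⁻¹' Ioi (0 : ℝ) = Ioi 0 := Set.ext fun y ↦ inv_pos (a := y)
        rw [this]
    _ = ∫ y in Ioc 0 r⁻¹, max 0 (1 - r / y⁻¹) ∂ν :=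
        setIntegral_eq_of_subset_of_forall_sdiff_eq_zero measurableSet_Ioi Ioc_subset_Ioi_self
          kernel_eq_zero
    _ = r * ∫ y in Ioc 0 r⁻¹, (r⁻¹ - y) ∂ν := by
        rw [setIntegral_congr_fun measurableSet_Ioc kernel_eq, integral_const_mul]

theorem rightDerivStieltjes_perspective_of_nonpos (hf : ConvexOn ℝ univ (perspective f))
    (hlim : Tendsto f atTop (𝓝 0)) {t : ℝ} (ht : t ≤ 0) : rightDerivStieltjes hf t = 0 :=
  (hasDerivWithinAt_perspective_of_nonpos hlim ht).derivWithin (uniqueDiffWithinAt_Ioi t)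

/-- The measure `μ` whose mixture of tent functions `r ↦ max 0 (1 - r / x)` is `f` on `(0, ∞)`: the
image under inversion of the second derivative of the perspective of `f`. -/
noncomputable def mixingMeasure (hf : ConvexOn ℝ univ (perspective f)) : Measure ℝ :=
  (rightDerivStieltjes hf).measure.map (·⁻¹)

theorem tendsto_rightDerivStieltjes_perspective_atBot (hf : ConvexOn ℝ univ (perspective f))
    (hlim : Tendsto f atTop (𝓝 0)) : Tendsto (rightDerivStieltjes hf) atBot (𝓝 0) := by
  refine tendsto_const_nhds.congr' ?_
  filter_upwards [eventually_le_atBot 0] with t ht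
  exact (rightDerivStieltjes_perspective_of_nonpos hf hlim ht).symm

theorem mixingMeasure_Iic_zero (hf : ConvexOn ℝ univ (perspective f))
    (hlim : Tendsto f atTop (𝓝 0)) : mixingMeasure hf (Iic 0) = 0 := by
  have inv_preimage_Iic : (·⁻¹) ⁻¹' Iic (0 : ℝ) = Iic 0 :=
    Set.ext fun y ↦ inv_nonpos (a := y)
  rw [mixingMeasure, Measure.map_apply measurable_inv measurableSet_Iic, inv_preimage_Iic,
    StieltjesFunction.measure_Iic _ (tendsto_rightDerivStieltjes_perspective_atBot hf hlim),
    rightDerivStieltjes_perspective_of_nonpos hf hlim le_rfl, sub_zero, ENNReal.ofReal_zero]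

theorem mixingMeasure_univ (hf : ConvexOn ℝ univ (perspective f)) (hlim : Tendsto f atTop (𝓝 0))
    (hcont : ContinuousWithinAt f (Ioi 0) 0) :
    mixingMeasure hf univ = ENNReal.ofReal (f 0) := by
  rw [mixingMeasure, Measure.map_apply measurable_inv MeasurableSet.univ, preimage_univ,
    StieltjesFunction.measure_univ _ (tendsto_rightDerivStieltjes_perspective_atBot hf hlim)
      (tendsto_rightDerivStieltjes_atTop hf (tendsto_perspective_div_atTop hcont)), sub_zero]

theorem eq_setIntegral_mixingMeasure (hf : ConvexOn ℝ univ (perspective f))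
    (hlim : Tendsto f atTop (𝓝 0)) {r : ℝ} (hr : 0 < r) :
    f r = ∫ x in Ioi 0, max 0 (1 - r / x) ∂mixingMeasure hf := by
  rw [mixingMeasure, setIntegral_Ioi_max_one_sub_div_map_inv _ hr,
    setIntegral_Ioc_sub_rightDerivStieltjes hf (inv_nonneg.2 hr.le),
    rightDerivStieltjes_perspective_of_nonpos hf hlim le_rfl, perspective_of_nonpos le_rfl,
    perspective_of_nonneg (inv_nonneg.2 hr.le), inv_inv, zero_mul, sub_zero, sub_zero,
    mul_inv_cancel_left₀ hr.ne']

/-- **Polya's criterion.** If `k : ℝ → ℝ` is continuous, even, takes values in `[0,1]`,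
`k 0 = 1`, `k r → 0` as `r → ∞`, and `k` is convex on `[0,∞)`, then there is a
probability measure `μ` on `ℝ` with `μ (Iic 0) = 0` such that
`k r = ∫₀^∞ max 0 (1 - |r|/x) dμ(x)` for all `r`. -/
theorem polya_criterion (k : ℝ → ℝ)
    (hcont : Continuous k)
    (heven : ∀ r : ℝ, k (-r) = k r)
    (hrange : ∀ r : ℝ, k r ∈ Set.Icc (0 : ℝ) 1)
    (h0 : k 0 = 1)
    (hlim : Tendsto k atTop (nhds 0))
    (hconv : ∀ r₁ r₂ t : ℝ, 0 ≤ r₁ → 0 ≤ r₂ → t ∈ Set.Icc (0 : ℝ) 1 →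
      k (t * r₁ + (1 - t) * r₂) ≤ t * k r₁ + (1 - t) * k r₂) :
    ∃ μ : Measure ℝ, IsProbabilityMeasure μ ∧ μ (Set.Iic 0) = 0 ∧
      ∀ r : ℝ, k r = ∫ x in Set.Ioi (0 : ℝ), max 0 (1 - |r| / x) ∂μ := by
  have convex : ConvexOn ℝ (Ici 0) k := by
    refine ⟨convex_Ici 0, fun x hx y hy a b ha hb hab ↦ ?_⟩
    obtain rfl : b = 1 - a := by linarith
    exact hconv x y a hx hy ⟨ha, sub_nonneg.1 hb⟩
  have antitone : AntitoneOn k (Ici 0) :=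
    antitoneOn_Ici_of_convexOn_of_le convex fun x _ ↦ (hrange x).2
  have hG : ConvexOn ℝ univ (perspective k) :=
    convexOn_perspective convex antitone fun x _ ↦ (hrange x).1
  have mass_one : mixingMeasure hG univ = 1 := by
    rw [mixingMeasure_univ hG hlim hcont.continuousWithinAt, h0, ENNReal.ofReal_one]
  have null : mixingMeasure hG (Iic 0) = 0 := mixingMeasure_Iic_zero hG hlim
  refine ⟨mixingMeasure hG, ⟨mass_one⟩, null, fun r ↦ ?_⟩
  have k_abs : k |r| = k r := by rcases abs_choice r with h | h <;> simp only [h, heven]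
  rcases eq_or_ne r 0 with rfl | hr
  · have mass_Ioi : mixingMeasure hG (Ioi 0) = 1 := by
      rw [← compl_Iic, measure_compl measurableSet_Iic (by simp [null]), mass_one, null, tsub_zero]
    simp [h0, measureReal_def, mass_Ioi]
  · rw [← k_abs, eq_setIntegral_mixingMeasure hG hlim (abs_pos.2 hr)]
end

section
/- Let μ be a probability measure on ℝ with μ((−∞,0]) = 0 and define k_μ(r) = ∫₀^∞ max{0, 1 − |r|/x} dμ(x). Then k_μ is real-valued, continuous, even, satisfies k_μ(0) = 1 and lim_{r→∞} k_μ(r) = 0, and k_μ is convex on [0,∞). -/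
open MeasureTheory Filter

/-!
A Polya kernel is a mixture of the tents `r ↦ max 0 (1 - |r| / x)`. Each tent is continuous, even,
eventually zero, and convex on `[0, ∞)` as a maximum of two affine functions. On the half-widths
`x > 0` all tents lie between `0` and `1`, so for a finite measure dominated convergence passes
continuity and the limit at infinity to the mixture, and integration preserves convexity.
-/

/-- The tent `r ↦ max 0 (1 - |r| / x)` of half-width `x`, of which Polya kernels are mixtures.
Since division by zero gives zero, the tent of half-width `0` is the constant `1`. -/
noncomputable def tent (x r : ℝ) : ℝ := max 0 (1 - |r| / x)

lemma tent_neg (x r : ℝ) : tent x (-r) = tent x r := by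
  simp only [tent, abs_neg]

lemma tent_zero_right (x : ℝ) : tent x 0 = 1 := by
  simp [tent]

lemma tent_nonneg (x r : ℝ) : 0 ≤ tent x r := le_max_left _ _

lemma tent_le_one {x : ℝ} (hx : 0 ≤ x) (r : ℝ) : tent x r ≤ 1 :=
  max_le zero_le_one (sub_le_self 1 (by positivity))

lemma tent_eq_zero_of_le_abs {x r : ℝ} (hx : 0 < x) (hr : x ≤ |r|) : tent x r = 0 :=
  max_eq_left (sub_nonpos.2 ((one_le_div hx).2 hr))

lemma tendsto_tent_atTop {x : ℝ} (hx : 0 < x) : Tendsto (tent x) atTop (nhds 0) := by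
  refine tendsto_const_nhds.congr' ?_
  filter_upwards [eventually_ge_atTop x] with r hr
  exact (tent_eq_zero_of_le_abs hx (hr.trans (le_abs_self r))).symm

lemma continuous_tent (x : ℝ) : Continuous (tent x) := by
  unfold tent
  fun_prop

lemma measurable_tent_left (r : ℝ) : Measurable fun x ↦ tent x r := by
  unfold tent
  fun_prop

lemma convexOn_tent (x : ℝ) : ConvexOn ℝ (Set.Ici 0) (tent x) := by
  have affine_side : ConvexOn ℝ (Set.Ici 0) fun r : ℝ ↦ 1 - r / x := by
    refine ⟨convex_Ici 0, fun r _ s _ a b _ _ hab ↦ le_of_eq ?_⟩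
    simp only [smul_eq_mul]
    linear_combination -hab
  refine ((convexOn_const 0 (convex_Ici 0)).sup affine_side).congr fun r hr ↦ ?_
  simp only [Pi.sup_apply, tent, abs_of_nonneg (Set.mem_Ici.1 hr)]

lemma ae_norm_tent_le_one (μ : Measure ℝ) (r : ℝ) :
    ∀ᵐ x ∂μ.restrict (Set.Ioi 0), ‖tent x r‖ ≤ 1 := by
  refine ae_restrict_of_forall_mem measurableSet_Ioi fun x (hx : 0 < x) ↦ ?_
  rw [Real.norm_of_nonneg (tent_nonneg x r)]
  exact tent_le_one hx.le r

lemma integrableOn_tent (μ : Measure ℝ) [IsFiniteMeasure μ] (r : ℝ) :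
    IntegrableOn (fun x ↦ tent x r) (Set.Ioi 0) μ :=
  Integrable.of_bound (measurable_tent_left r).aestronglyMeasurable 1 (ae_norm_tent_le_one μ r)

/-- The Polya kernel `k_μ` of a measure `μ`: the mixture of tents whose half-widths are distributed
according to the restriction of `μ` to `(0, ∞)`. -/
noncomputable def polyaKernel (μ : Measure ℝ) (r : ℝ) : ℝ :=
  ∫ x in Set.Ioi 0, tent x r ∂μ

namespace polyaKernel

lemma even (μ : Measure ℝ) : (polyaKernel μ).Even := fun r ↦ by
  simp only [polyaKernel, tent_neg]

lemma apply_zero (μ : Measure ℝ) : polyaKernel μ 0 = μ.real (Set.Ioi 0) := by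
  simp [polyaKernel, tent_zero_right]

variable (μ : Measure ℝ) [IsFiniteMeasure μ]

lemma continuous : Continuous (polyaKernel μ) :=
  continuous_of_dominated (fun r ↦ (measurable_tent_left r).aestronglyMeasurable)
    (ae_norm_tent_le_one μ) (integrable_const 1) (.of_forall continuous_tent)

lemma tendsto_atTop : Tendsto (polyaKernel μ) atTop (nhds 0) := by
  have limit_eq : ∫ _ in Set.Ioi (0 : ℝ), (0 : ℝ) ∂μ = 0 := integral_zero _ _
  rw [← limit_eq]
  refine tendsto_integral_filter_of_dominated_convergence (fun _ ↦ 1)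
    (.of_forall fun r ↦ (measurable_tent_left r).aestronglyMeasurable)
    (.of_forall (ae_norm_tent_le_one μ)) (integrable_const 1) ?_
  exact ae_restrict_of_forall_mem measurableSet_Ioi fun _ ↦ tendsto_tent_atTop

lemma convexOn : ConvexOn ℝ (Set.Ici 0) (polyaKernel μ) :=
  integral_convexOn_of_integrand_ae (convex_Ici 0) (.of_forall convexOn_tent)
    fun r _ ↦ integrableOn_tent μ r

end polyaKernel

theorem polya_kernel_properties_general (μ : Measure ℝ) [IsFiniteMeasure μ] :
    Continuous (polyaKernel μ) ∧
    (polyaKernel μ).Even ∧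
    polyaKernel μ 0 = μ.real (Set.Ioi 0) ∧
    Tendsto (polyaKernel μ) atTop (nhds 0) ∧
    ConvexOn ℝ (Set.Ici 0) (polyaKernel μ) :=
  ⟨polyaKernel.continuous μ, polyaKernel.even μ, polyaKernel.apply_zero μ,
    polyaKernel.tendsto_atTop μ, polyaKernel.convexOn μ⟩

/-- The 'if' direction of Polya's characterization (Corollary 2.2): for any probability
measure `μ` on `ℝ` with positive support, the Polya kernel
`k_μ(r) = ∫₀^∞ max 0 (1 - |r|/x) dμ(x)` is continuous, even, satisfies `k_μ 0 = 1`,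
tends to `0` at infinity, and is convex on `[0,∞)`. -/
theorem polya_kernel_properties (μ : Measure ℝ) [IsProbabilityMeasure μ]
    (hμ : μ (Set.Iic 0) = 0)
    (k : ℝ → ℝ)
    (hk : ∀ r : ℝ, k r = ∫ x in Set.Ioi (0 : ℝ), max 0 (1 - |r| / x) ∂μ) :
    Continuous k ∧
    (∀ r : ℝ, k (-r) = k r) ∧
    k 0 = 1 ∧
    Tendsto k atTop (nhds 0) ∧
    (∀ r₁ r₂ t : ℝ, 0 ≤ r₁ → 0 ≤ r₂ → t ∈ Set.Icc (0 : ℝ) 1 →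
      k (t * r₁ + (1 - t) * r₂) ≤ t * k r₁ + (1 - t) * k r₂) := by
  obtain rfl : k = polyaKernel μ := funext hk
  have mass_Ioi : μ.real (Set.Ioi 0) = 1 := by
    rw [← Set.compl_Iic, probReal_compl_eq_one_sub measurableSet_Iic, measureReal_def, hμ,
      ENNReal.toReal_zero, sub_zero]
  obtain ⟨hcont, heven, hzero, hlim, hconv⟩ := polya_kernel_properties_general μ
  exact ⟨hcont, heven, hzero.trans mass_Ioi, hlim, fun r₁ r₂ t hr₁ hr₂ ht ↦
    hconv.2 hr₁ hr₂ ht.1 (sub_nonneg.2 ht.2) (add_sub_cancel t 1)⟩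
end

section
/- Let k : ℝ → ℝ be a continuous, even function taking values in [0,1] with k(0) = 1, lim_{r→∞} k(r) = 0, k convex on [0,∞), and suppose k is twice continuously differentiable on (0,∞). Then for every r ≥ 0, k(r) = ∫₀^∞ max{0, 1 − r/x} · x k''(x) dx. In particular, x ↦ x k''(x) is a probability density on (0,∞), and the function F(x) = 1 − k(x) + x k'(x) is the cumulative distribution function of the measure in Polya's criterion, with F'(x) = x k''(x) for x > 0. -/
open MeasureTheory Filter

/-!
Taylor's formula with integral remainder, based at infinity: `(x - r) k' x - k x` is an
antiderivative of `(x - r) k'' x`. Convexity makes `k''` nonnegative, and it forces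
`(x - r) k' x → 0` both as `x → r⁺` and as `x → ∞`, so `∫ x in (r, ∞), (x - r) k'' x = k r`.
For `x > r` this integrand is `max 0 (1 - r / x) * (x * k'' x)`, which vanishes for `0 < x ≤ r`.
-/

section

open Set Topology

variable {f f' f'' : ℝ → ℝ} {s : Set ℝ} {r x y L : ℝ}

theorem convexOn_of_forall_mem_Icc (hs : Convex ℝ s)
    (h : ∀ x ∈ s, ∀ y ∈ s, ∀ t ∈ Icc (0 : ℝ) 1,
      f (t * x + (1 - t) * y) ≤ t * f x + (1 - t) * f y) :
    ConvexOn ℝ s f := by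
  refine ⟨hs, fun x hx y hy a b ha hb hab => ?_⟩
  obtain rfl : b = 1 - a := by linarith
  exact h x hx y hy a ⟨ha, by linarith⟩

theorem mul_sub_le_sub_of_convexOn {m : ℝ} (hf : ConvexOn ℝ s f) (hx : x ∈ s) (hy : y ∈ s)
    (hfx : HasDerivAt f m x) : m * (y - x) ≤ f y - f x := by
  rcases lt_trichotomy x y with hxy | rfl | hyx
  · have hslope := hf.le_slope_of_hasDerivAt hx hy hxy hfx
    rwa [slope_def_field, le_div_iff₀ (sub_pos.2 hxy)] at hslope
  · simp
  · have hslope := hf.slope_le_of_hasDerivAt hy hx hyx hfx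
    rw [slope_def_field, div_le_iff₀ (sub_pos.2 hyx)] at hslope
    linarith

theorem second_deriv_nonneg_of_convexOn {c : ℝ} (hf : ConvexOn ℝ s f)
    (hf' : ∀ z ∈ s, HasDerivAt f (f' z) z) (hx : AccPt x (𝓟 s))
    (hf'' : HasDerivWithinAt f' c s x) : 0 ≤ c := by
  have hmono : MonotoneOn f' s :=
    (hf.monotoneOn_deriv fun z hz => (hf' z hz).differentiableAt).congr
      fun z hz => (hf' z hz).deriv
  exact hf''.nonneg_of_monotoneOn hx hmono

theorem tendsto_sub_mul_deriv_of_convexOn {l : Filter ℝ} (hf : ConvexOn ℝ (Ici r) f)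
    (hf' : ∀ x ∈ Ioi r, HasDerivAt f (f' x) x) (hl : Ioi r ∈ l)
    (hdilation : ∀ c > 0, Tendsto (fun x => r + c * (x - r)) l l) (hlim : Tendsto f l (𝓝 L)) :
    Tendsto (fun x => (x - r) * f' x) l (𝓝 0) := by
  -- Compare the graph with its tangent at `x`, at the midpoint of `r` and `x` for the lower bound
  -- and at the reflection of `r` in `x` for the upper bound.
  have htangent : ∀ x ∈ Ioi r, ∀ c > 0,
      (c - 1) * ((x - r) * f' x) ≤ f (r + c * (x - r)) - f x := fun x hx c hc => by
    have hmem : r + c * (x - r) ∈ Ici r :=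
      le_add_of_nonneg_right (mul_nonneg hc.le (sub_nonneg.2 hx.le))
    calc (c - 1) * ((x - r) * f' x) = f' x * (r + c * (x - r) - x) := by ring
      _ ≤ f (r + c * (x - r)) - f x :=
        mul_sub_le_sub_of_convexOn hf (Ioi_subset_Ici_self hx) hmem (hf' x hx)
  have hincrement : ∀ c > 0, Tendsto (fun x => f (r + c * (x - r)) - f x) l (𝓝 0) :=
    fun c hc => by
      simpa only [sub_self, Function.comp_def] using (hlim.comp (hdilation c hc)).sub hlim
  have hlower : Tendsto (fun x => -2 * (f (r + 1 / 2 * (x - r)) - f x)) l (𝓝 0) := by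
    simpa only [mul_zero] using (hincrement (1 / 2) one_half_pos).const_mul (-2)
  refine tendsto_of_tendsto_of_tendsto_of_le_of_le' hlower (hincrement 2 two_pos) ?_ ?_
  · filter_upwards [hl] with x hx
    linarith [htangent x hx (1 / 2) one_half_pos]
  · filter_upwards [hl] with x hx
    linarith [htangent x hx 2 two_pos]

theorem tendsto_sub_mul_deriv_nhdsGT_of_convexOn (hf : ConvexOn ℝ (Ici r) f)
    (hf' : ∀ x ∈ Ioi r, HasDerivAt f (f' x) x) (hlim : Tendsto f (𝓝[>] r) (𝓝 L)) :
    Tendsto (fun x => (x - r) * f' x) (𝓝[>] r) (𝓝 0) := by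
  refine tendsto_sub_mul_deriv_of_convexOn hf hf' self_mem_nhdsWithin (fun c hc => ?_) hlim
  have hcont : Continuous fun x => r + c * (x - r) := by fun_prop
  have hmaps : MapsTo (fun x => r + c * (x - r)) (Ioi r) (Ioi r) := fun x hx =>
    lt_add_of_pos_right r (mul_pos hc (sub_pos.2 hx))
  simpa only [sub_self, mul_zero, add_zero] using
    (hcont.continuousWithinAt (x := r)).tendsto_nhdsWithin hmaps

theorem tendsto_sub_mul_deriv_atTop_of_convexOn (hf : ConvexOn ℝ (Ici r) f)
    (hf' : ∀ x ∈ Ioi r, HasDerivAt f (f' x) x) (hlim : Tendsto f atTop (𝓝 L)) :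
    Tendsto (fun x => (x - r) * f' x) atTop (𝓝 0) :=
  tendsto_sub_mul_deriv_of_convexOn hf hf' (Ioi_mem_atTop r)
    (fun _ hc => tendsto_atTop_add_const_left _ _
      ((tendsto_atTop_add_const_right _ (-r) tendsto_id).const_mul_atTop hc)) hlim

theorem hasDerivAt_sub_mul_deriv_sub {c : ℝ} (r : ℝ) (hf' : HasDerivAt f (f' x) x)
    (hf'' : HasDerivAt f' c x) :
    HasDerivAt (fun y => (y - r) * f' y - f y) ((x - r) * c) x :=
  ((((hasDerivAt_id x).sub_const r).mul hf'').sub hf').congr_deriv (by simp)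

theorem continuousWithinAt_sub_mul_deriv_sub_of_convexOn (hf : ConvexOn ℝ (Ici r) f)
    (hf' : ∀ x ∈ Ioi r, HasDerivAt f (f' x) x) (hcont : ContinuousWithinAt f (Ioi r) r) :
    ContinuousWithinAt (fun x => (x - r) * f' x - f x) (Ici r) r := by
  have hproduct : ContinuousWithinAt (fun x => (x - r) * f' x) (Ioi r) r := by
    simpa only [ContinuousWithinAt, sub_self, zero_mul] using
      tendsto_sub_mul_deriv_nhdsGT_of_convexOn hf hf' hcont
  exact continuousWithinAt_Ioi_iff_Ici.1 (hproduct.sub hcont)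

theorem tendsto_sub_mul_deriv_sub_atTop_of_convexOn (hf : ConvexOn ℝ (Ici r) f)
    (hf' : ∀ x ∈ Ioi r, HasDerivAt f (f' x) x) (hlim : Tendsto f atTop (𝓝 L)) :
    Tendsto (fun x => (x - r) * f' x - f x) atTop (𝓝 (-L)) := by
  simpa only [zero_sub] using (tendsto_sub_mul_deriv_atTop_of_convexOn hf hf' hlim).sub hlim

theorem sub_mul_second_deriv_nonneg_of_convexOn (hf : ConvexOn ℝ (Ici r) f)
    (hf' : ∀ x ∈ Ioi r, HasDerivAt f (f' x) x) (hf'' : ∀ x ∈ Ioi r, HasDerivAt f' (f'' x) x) :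
    ∀ x ∈ Ioi r, 0 ≤ (x - r) * f'' x := fun x hx =>
  mul_nonneg (sub_nonneg.2 (le_of_lt hx)) <|
    second_deriv_nonneg_of_convexOn (hf.subset Ioi_subset_Ici_self (convex_Ioi r)) hf'
      (uniqueDiffOn_Ioi r x hx).accPt (hf'' x hx).hasDerivWithinAt

theorem integrableOn_sub_mul_second_deriv_of_convexOn (hf : ConvexOn ℝ (Ici r) f)
    (hf' : ∀ x ∈ Ioi r, HasDerivAt f (f' x) x) (hf'' : ∀ x ∈ Ioi r, HasDerivAt f' (f'' x) x)
    (hcont : ContinuousWithinAt f (Ioi r) r) (hlim : Tendsto f atTop (𝓝 L)) :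
    IntegrableOn (fun x => (x - r) * f'' x) (Ioi r) :=
  integrableOn_Ioi_deriv_of_nonneg
    (continuousWithinAt_sub_mul_deriv_sub_of_convexOn hf hf' hcont)
    (fun x hx => hasDerivAt_sub_mul_deriv_sub r (hf' x hx) (hf'' x hx))
    (sub_mul_second_deriv_nonneg_of_convexOn hf hf' hf'')
    (tendsto_sub_mul_deriv_sub_atTop_of_convexOn hf hf' hlim)

theorem integral_sub_mul_second_deriv_of_convexOn (hf : ConvexOn ℝ (Ici r) f)
    (hf' : ∀ x ∈ Ioi r, HasDerivAt f (f' x) x) (hf'' : ∀ x ∈ Ioi r, HasDerivAt f' (f'' x) x)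
    (hcont : ContinuousWithinAt f (Ioi r) r) (hlim : Tendsto f atTop (𝓝 L)) :
    ∫ x in Ioi r, (x - r) * f'' x = f r - L := by
  have hFTC := integral_Ioi_of_hasDerivAt_of_nonneg
    (continuousWithinAt_sub_mul_deriv_sub_of_convexOn hf hf' hcont)
    (fun x hx => hasDerivAt_sub_mul_deriv_sub r (hf' x hx) (hf'' x hx))
    (sub_mul_second_deriv_nonneg_of_convexOn hf hf' hf'')
    (tendsto_sub_mul_deriv_sub_atTop_of_convexOn hf hf' hlim)
  rw [hFTC]
  ring

theorem max_zero_one_sub_div_mul (hx : 0 < x) (c : ℝ) :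
    max 0 (1 - r / x) * (x * c) = (Ioi r).indicator (fun y => (y - r) * c) x := by
  rcases lt_or_ge r x with hrx | hxr
  · rw [indicator_of_mem (mem_Ioi.2 hrx),
      max_eq_right (sub_nonneg.2 ((div_le_one hx).2 hrx.le))]
    field_simp
  · rw [indicator_of_notMem (notMem_Ioi.2 hxr),
      max_eq_left (sub_nonpos.2 ((one_le_div hx).2 hxr)), zero_mul]

theorem integral_max_zero_one_sub_div_mul (hr : 0 ≤ r) (g : ℝ → ℝ) :
    ∫ x in Ioi 0, max 0 (1 - r / x) * (x * g x) = ∫ x in Ioi r, (x - r) * g x :=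
  calc ∫ x in Ioi 0, max 0 (1 - r / x) * (x * g x)
      = ∫ x in Ioi 0, (Ioi r).indicator (fun y => (y - r) * g y) x :=
        setIntegral_congr_fun measurableSet_Ioi fun x hx => max_zero_one_sub_div_mul hx (g x)
    _ = ∫ x in Ioi r, (x - r) * g x := by
        rw [setIntegral_indicator measurableSet_Ioi, Ioi_inter_Ioi, max_eq_right hr]

theorem polya_rahimi_recht_density_general {k k' k'' : ℝ → ℝ}
    (hconv : ConvexOn ℝ (Ici 0) k) (hcont : ContinuousWithinAt k (Ioi 0) 0)
    (hlim : Tendsto k atTop (𝓝 L)) (hk' : ∀ x ∈ Ioi 0, HasDerivAt k (k' x) x)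
    (hk'' : ∀ x ∈ Ioi 0, HasDerivAt k' (k'' x) x) :
    (∀ r, 0 ≤ r → k r - L = ∫ x in Ioi 0, max 0 (1 - r / x) * (x * k'' x)) ∧
    (∀ x ∈ Ioi 0, 0 ≤ x * k'' x) ∧
    IntegrableOn (fun x => x * k'' x) (Ioi 0) ∧
    ∫ x in Ioi 0, x * k'' x = k 0 - L ∧
    ∀ x ∈ Ioi 0, HasDerivAt (fun y => k 0 - k y + y * k' y) (x * k'' x) x := by
  refine ⟨fun r hr => ?_, ?_, ?_, ?_, fun x hx => ?_⟩
  · have hsub : Ioi r ⊆ Ioi 0 := Ioi_subset_Ioi hr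
    have hcont_r : ContinuousWithinAt k (Ioi r) r := by
      rcases hr.eq_or_lt with rfl | hr
      · exact hcont
      · exact (hk' r hr).continuousAt.continuousWithinAt
    rw [integral_max_zero_one_sub_div_mul hr, integral_sub_mul_second_deriv_of_convexOn
      (hconv.subset (Ici_subset_Ici.2 hr) (convex_Ici r))
      (fun x hx => hk' x (hsub hx)) (fun x hx => hk'' x (hsub hx)) hcont_r hlim]
  · simpa only [sub_zero] using sub_mul_second_deriv_nonneg_of_convexOn hconv hk' hk''
  · simpa only [sub_zero] using
      integrableOn_sub_mul_second_deriv_of_convexOn hconv hk' hk'' hcont hlim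
  · simpa only [sub_zero] using
      integral_sub_mul_second_deriv_of_convexOn hconv hk' hk'' hcont hlim
  · have hderiv := (hasDerivAt_sub_mul_deriv_sub 0 (hk' x hx) (hk'' x hx)).const_add (k 0)
    simpa only [sub_zero, ← add_sub_assoc, add_sub_right_comm] using hderiv

end

/-- The Rahimi–Recht identity recovered from Polya's criterion: if `k` is a continuous,
even, `[0,1]`-valued function with `k 0 = 1`, vanishing at infinity, convex on `[0,∞)`,
and twice continuously differentiable on `(0,∞)` with first and second derivatives `k'`
and `k''`, then `k(r) = ∫₀^∞ max 0 (1 - r/x) · x k''(x) dx` for `r ≥ 0`; moreover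
`x ↦ x k''(x)` is a probability density on `(0,∞)` and
`F(x) = 1 - k(x) + x k'(x)` satisfies `F'(x) = x k''(x)` on `(0,∞)`. -/
theorem polya_rahimi_recht_density (k k' k'' : ℝ → ℝ)
    (hcont : Continuous k)
    (heven : ∀ r : ℝ, k (-r) = k r)
    (hrange : ∀ r : ℝ, k r ∈ Set.Icc (0 : ℝ) 1)
    (h0 : k 0 = 1)
    (hlim : Tendsto k atTop (nhds 0))
    (hconv : ∀ r₁ r₂ t : ℝ, 0 ≤ r₁ → 0 ≤ r₂ → t ∈ Set.Icc (0 : ℝ) 1 →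
      k (t * r₁ + (1 - t) * r₂) ≤ t * k r₁ + (1 - t) * k r₂)
    (hk' : ∀ x ∈ Set.Ioi (0 : ℝ), HasDerivAt k (k' x) x)
    (hk'' : ∀ x ∈ Set.Ioi (0 : ℝ), HasDerivAt k' (k'' x) x)
    (hk''cont : ContinuousOn k'' (Set.Ioi (0 : ℝ))) :
    (∀ r : ℝ, 0 ≤ r →
        k r = ∫ x in Set.Ioi (0 : ℝ), max 0 (1 - r / x) * (x * k'' x)) ∧
    (∀ x ∈ Set.Ioi (0 : ℝ), 0 ≤ x * k'' x) ∧
    (∫ x in Set.Ioi (0 : ℝ), x * k'' x) = 1 ∧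
    (∀ x ∈ Set.Ioi (0 : ℝ),
        HasDerivAt (fun y => 1 - k y + y * k' y) (x * k'' x) x) := by
  have hconvex := convexOn_of_forall_mem_Icc (convex_Ici 0)
    fun x hx y hy t ht => hconv x y t hx hy ht
  obtain ⟨hmixture, hnonneg, -, hmass, hcdf⟩ :=
    polya_rahimi_recht_density_general hconvex hcont.continuousWithinAt hlim hk' hk''
  simp only [h0, sub_zero] at hmixture hmass hcdf
  exact ⟨hmixture, hnonneg, hmass, hcdf⟩
end

section
/- For every shape s > 1, scale θ > 0, and r ≥ 0: ∫₀^∞ max{0, 1 − r/x} · x^{s−1} e^{−x/θ} / (Γ(s) θ^s) dx = [Γ(s, r/θ) − (r/θ) Γ(s−1, r/θ)] / Γ(s), where Γ(s) is the gamma function and Γ(s, t) = ∫_t^∞ u^{s−1} e^{−u} du is the upper incomplete gamma function. -/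
open MeasureTheory Real

/-- Upper incomplete gamma function `Γ(s, t) = ∫_t^∞ u^{s-1} e^{-u} du`. -/
noncomputable def upperIncompleteGamma (s t : ℝ) : ℝ :=
  ∫ u in Set.Ioi t, u ^ (s - 1) * Real.exp (-u)

/-! The factor `max 0 (1 - r / x)` cuts the integral down to `x > r`, and the substitution
`x = θ u` turns it into `∫_t^∞ (1 - t / u) u^{s-1} e^{-u} du` with `t = r / θ`, whose two terms are
incomplete gamma integrals of orders `s` and `s - 1`. -/

theorem setIntegral_Ioi_max_zero_one_sub_div_mul (μ : Measure ℝ) (f : ℝ → ℝ) {r : ℝ}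
    (hr : 0 ≤ r) :
    ∫ x in Set.Ioi 0, max 0 (1 - r / x) * f x ∂μ = ∫ x in Set.Ioi r, (1 - r / x) * f x ∂μ := by
  have vanishes_off_Ioi : ∀ x ∈ Set.Ioi 0 \ Set.Ioi r, max 0 (1 - r / x) * f x = 0 := by
    rintro x ⟨hx : 0 < x, hxr⟩
    have : 1 ≤ r / x := (one_le_div hx).2 (not_lt.1 hxr)
    rw [max_eq_left (by linarith), zero_mul]
  rw [setIntegral_eq_of_subset_of_forall_sdiff_eq_zero measurableSet_Ioi
    (Set.Ioi_subset_Ioi hr) vanishes_off_Ioi]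
  refine setIntegral_congr_fun measurableSet_Ioi fun x (hx : r < x) ↦ ?_
  have : r / x ≤ 1 := div_le_one_of_le₀ hx.le (hr.trans hx.le)
  rw [max_eq_right (by linarith)]

theorem integral_Ioi_rpow_smul_comp_div {E : Type*} [NormedAddCommGroup E] [NormedSpace ℝ E]
    (g : ℝ → E) (s : ℝ) {a c : ℝ} (ha : 0 ≤ a) (hc : 0 < c) :
    ∫ x in Set.Ioi a, x ^ (s - 1) • g (x / c)
      = c ^ s • ∫ u in Set.Ioi (a / c), u ^ (s - 1) • g u := by
  have hpow : c * c ^ (s - 1) = c ^ s := by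
    rw [rpow_sub_one hc.ne', mul_div_cancel₀ _ hc.ne']
  calc ∫ x in Set.Ioi a, x ^ (s - 1) • g (x / c)
      = c • ∫ u in Set.Ioi (a / c), (c * u) ^ (s - 1) • g (c * u / c) := by
        rw [integral_comp_mul_left_Ioi' (fun x ↦ x ^ (s - 1) • g (x / c)) _ hc,
          mul_div_cancel₀ a hc.ne']
    _ = c ^ s • ∫ u in Set.Ioi (a / c), u ^ (s - 1) • g u := by
        rw [← integral_smul, ← integral_smul]
        refine setIntegral_congr_fun measurableSet_Ioi fun u (hu : a / c < u) ↦ ?_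
        have hu_nonneg : 0 ≤ u := (div_nonneg ha hc.le).trans hu.le
        simp only [mul_div_cancel_left₀ u hc.ne', mul_rpow hc.le hu_nonneg, smul_smul,
          ← mul_assoc, hpow]

theorem integrableOn_Ioi_rpow_mul_exp_neg {s t : ℝ} (ht : 0 ≤ t) (hst : 0 < t ∨ 0 < s) :
    IntegrableOn (fun u ↦ u ^ (s - 1) * exp (-u)) (Set.Ioi t) := by
  simp_rw [mul_comm _ (exp _)]
  rcases hst with ht_pos | hs
  · refine integrable_of_isBigO_exp_neg one_half_pos ?_ (Gamma_integrand_isLittleO _).isBigO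
    exact continuousOn_id.neg.rexp.mul
      (continuousOn_id.rpow_const fun u hu ↦ .inl (ht_pos.trans_le hu).ne')
  · exact (GammaIntegral_convergent hs).mono_set (Set.Ioi_subset_Ioi ht)

theorem integral_Ioi_one_sub_div_mul_rpow_mul_exp_neg {s t : ℝ} (ht : 0 ≤ t)
    (hst : 0 < t ∨ 1 < s) :
    ∫ u in Set.Ioi t, (1 - t / u) * (u ^ (s - 1) * exp (-u))
      = upperIncompleteGamma s t - t * upperIncompleteGamma (s - 1) t := by
  have integrable_s := integrableOn_Ioi_rpow_mul_exp_neg (s := s) ht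
    (hst.imp_right one_pos.trans)
  have integrable_sub_one := integrableOn_Ioi_rpow_mul_exp_neg (s := s - 1) ht
    (hst.imp_right sub_pos.2)
  rw [upperIncompleteGamma, upperIncompleteGamma, ← integral_const_mul,
    ← integral_sub integrable_s (integrable_sub_one.const_mul t)]
  refine setIntegral_congr_fun measurableSet_Ioi fun u (hu : t < u) ↦ ?_
  simp only [rpow_sub_one (ht.trans_lt hu).ne' (s - 1)]
  ring

theorem integral_max_zero_one_sub_div_mul_rpow_mul_exp_neg_div {s θ r : ℝ} (hθ : 0 < θ)
    (hr : 0 ≤ r) (hrs : 0 < r ∨ 1 < s) :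
    ∫ x in Set.Ioi 0, max 0 (1 - r / x) * (x ^ (s - 1) * exp (-(x / θ)))
      = θ ^ s * (upperIncompleteGamma s (r / θ)
          - r / θ * upperIncompleteGamma (s - 1) (r / θ)) := by
  calc ∫ x in Set.Ioi 0, max 0 (1 - r / x) * (x ^ (s - 1) * exp (-(x / θ)))
      = ∫ x in Set.Ioi r, (1 - r / x) * (x ^ (s - 1) * exp (-(x / θ))) :=
        setIntegral_Ioi_max_zero_one_sub_div_mul volume _ hr
    _ = ∫ x in Set.Ioi r, x ^ (s - 1) • ((1 - r / θ / (x / θ)) * exp (-(x / θ))) := by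
        simp only [div_div_div_cancel_right₀ hθ.ne', smul_eq_mul, mul_left_comm]
    _ = θ ^ s * ∫ u in Set.Ioi (r / θ), (1 - r / θ / u) * (u ^ (s - 1) * exp (-u)) := by
        rw [integral_Ioi_rpow_smul_comp_div (fun u ↦ (1 - r / θ / u) * exp (-u)) s hr hθ]
        simp only [smul_eq_mul, mul_left_comm]
    _ = _ := by
        rw [integral_Ioi_one_sub_div_mul_rpow_mul_exp_neg (div_nonneg hr hθ.le)
          (hrs.imp_left (div_pos · hθ))]

theorem polya_kernel_gamma_general {s θ r : ℝ} (hs : ∀ n : ℕ, s ≠ -n) (hθ : 0 < θ)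
    (hr : 0 ≤ r) (hrs : 0 < r ∨ 1 < s) :
    ∫ x in Set.Ioi (0 : ℝ),
        max 0 (1 - r / x) * (x ^ (s - 1) * exp (-(x / θ)) / (Gamma s * θ ^ s))
      = (upperIncompleteGamma s (r / θ)
          - r / θ * upperIncompleteGamma (s - 1) (r / θ)) / Gamma s := by
  have hΓ : Gamma s ≠ 0 := Gamma_ne_zero hs
  have hpow : θ ^ s ≠ 0 := (rpow_pos_of_pos hθ s).ne'
  simp_rw [← mul_div_assoc, integral_div]
  rw [integral_max_zero_one_sub_div_mul_rpow_mul_exp_neg_div hθ hr hrs,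
    div_eq_div_iff (mul_ne_zero hΓ hpow) hΓ]
  ring

/-- Equation (9): the Polya kernel constructed from the gamma distribution
`Gamma(s, θ)` (shape `s > 1`, scale `θ > 0`) equals
`[Γ(s, r/θ) - (r/θ) Γ(s-1, r/θ)] / Γ(s)` for `r ≥ 0`. -/
theorem polya_kernel_gamma (s θ : ℝ) (hs : 1 < s) (hθ : 0 < θ) (r : ℝ) (hr : 0 ≤ r) :
    ∫ x in Set.Ioi (0 : ℝ),
        max 0 (1 - r / x) * (x ^ (s - 1) * Real.exp (-(x / θ)) / (Real.Gamma s * θ ^ s))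
      = (upperIncompleteGamma s (r / θ)
          - (r / θ) * upperIncompleteGamma (s - 1) (r / θ)) / Real.Gamma s :=
  polya_kernel_gamma_general (fun n ↦ by linarith [n.cast_nonneg (α := ℝ)]) hθ hr (.inr hs)
end

section
/- For θ > 0, define k : ℝ → ℝ by k(r) = e^{−|r|/θ} − (|r|/θ) E₁(|r|/θ) for r ≠ 0 and k(0) = 1, where E₁(z) = ∫_z^∞ e^{−u}/u du is the exponential integral. Then for every t ≠ 0, ∫_ℝ k(r) e^{i r t} dr = log(1 + θ² t²) / (θ t²). -/
open MeasureTheory Real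

/-- The exponential integral `E₁(z) = ∫_z^∞ e^{-u}/u du`. -/
noncomputable def expIntegralE1 (z : ℝ) : ℝ :=
  ∫ u in Set.Ioi z, Real.exp (-u) / u

/-!
By the recurrence `n Eₙ₊₁(z) = e^{-z} - z Eₙ(z)` of the generalized exponential integrals, the
kernel is `k(r) = E₂(|r|/θ) = ∫_1^∞ u⁻² e^{-u|r|/θ} du`, a mixture of two-sided exponentials.
Fubini's theorem replaces each `e^{-c|r|}` by its Fourier transform `2c/(c² + t²)`, and the
remaining integral over `u` has the antiderivative `-log(1 + θ²t²/u²)`, up to the factor `1/(θt²)`.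
-/

open Filter Set Topology

section ExponentialIntegral

/-- The generalized exponential integral `Eₙ(z)`, in the form `∫_1^∞ e^{-zu}/uⁿ du` valid for
`z > 0`, which exhibits it as a mixture of exponentials in `z`. -/
noncomputable def expIntegralE (n : ℕ) (z : ℝ) : ℝ :=
  ∫ u in Ioi (1 : ℝ), exp (-(z * u)) / u ^ n

variable {z : ℝ}

lemma expIntegralE1_eq_expIntegralE_one (hz : 0 < z) : expIntegralE1 z = expIntegralE 1 z := by
  have hscale := integral_comp_mul_left_Ioi' (fun u : ℝ => exp (-u) / u) 1 hz
  rw [mul_one, smul_eq_mul, ← integral_const_mul] at hscale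
  rw [expIntegralE1, expIntegralE, ← hscale]
  refine setIntegral_congr_fun measurableSet_Ioi fun u _ => ?_
  simp only [pow_one]
  field_simp

lemma integrableOn_exp_neg_mul_div_pow (hz : 0 < z) (n : ℕ) :
    IntegrableOn (fun u : ℝ => exp (-(z * u)) / u ^ n) (Ioi 1) := by
  have hexp : IntegrableOn (fun u : ℝ => exp (-(z * u))) (Ioi 1) := by
    simpa only [neg_mul] using integrableOn_exp_mul_Ioi (neg_lt_zero.mpr hz) 1
  refine hexp.mono' (Measurable.aestronglyMeasurable (by fun_prop)) ?_
  filter_upwards [ae_restrict_mem measurableSet_Ioi] with u (hu : 1 < u)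
  rw [norm_of_nonneg (by positivity)]
  exact div_le_self (exp_pos _).le (one_le_pow₀ hu.le)

lemma hasDerivAt_neg_exp_neg_mul_div_pow (z : ℝ) (n : ℕ) {u : ℝ} (hu : u ≠ 0) :
    HasDerivAt (fun u : ℝ => -(exp (-(z * u)) / u ^ n))
      (z * (exp (-(z * u)) / u ^ n) + n * (exp (-(z * u)) / u ^ (n + 1))) u := by
  have hexp : HasDerivAt (fun u : ℝ => exp (-(z * u))) (exp (-(z * u)) * -(z * 1)) u :=
    ((hasDerivAt_id' u).const_mul z).fun_neg.exp
  refine (hexp.fun_div (hasDerivAt_pow n u) (pow_ne_zero n hu)).fun_neg.congr_deriv ?_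
  cases n with
  | zero => simp [mul_comm]
  | succ m =>
    rw [Nat.add_sub_cancel]
    field_simp
    ring

lemma natCast_mul_expIntegralE_succ (hz : 0 < z) (n : ℕ) :
    n * expIntegralE (n + 1) z = exp (-z) - z * expIntegralE n z := by
  have hint (m : ℕ) := integrableOn_exp_neg_mul_div_pow hz m
  have hlim : Tendsto (fun u : ℝ => -(exp (-(z * u)) / u ^ n)) atTop (𝓝 0) := by
    have hexp : Tendsto (fun u : ℝ => exp (-(z * u))) atTop (𝓝 0) :=
      tendsto_exp_neg_atTop_nhds_zero.comp (tendsto_id.const_mul_atTop hz)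
    rw [← neg_zero]
    refine (squeeze_zero' ?_ ?_ hexp).neg
    · filter_upwards [eventually_ge_atTop 1] with u hu
      positivity
    · filter_upwards [eventually_ge_atTop 1] with u hu
      exact div_le_self (exp_pos _).le (one_le_pow₀ hu)
  have hparts := integral_Ioi_of_hasDerivAt_of_tendsto'
    (fun u (hu : 1 ≤ u) => hasDerivAt_neg_exp_neg_mul_div_pow z n (zero_lt_one.trans_le hu).ne')
    (((hint n).const_mul z).add ((hint (n + 1)).const_mul n)) hlim
  rw [integral_add ((hint n).const_mul z) ((hint (n + 1)).const_mul n), integral_const_mul,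
    integral_const_mul, mul_one, one_pow, div_one, sub_neg_eq_add, zero_add] at hparts
  exact eq_sub_of_add_eq' hparts

lemma expIntegralE_two (hz : 0 < z) : expIntegralE 2 z = exp (-z) - z * expIntegralE1 z := by
  simpa [expIntegralE1_eq_expIntegralE_one hz] using natCast_mul_expIntegralE_succ hz 1

end ExponentialIntegral

section TwoSidedExponential

variable {c t : ℂ}

lemma cexp_neg_mul_abs_mul_cexp_of_nonpos (c t : ℂ) {r : ℝ} (hr : r ≤ 0) :
    Complex.exp (-(c * |r|)) * Complex.exp (Complex.I * r * t)
      = Complex.exp ((c + Complex.I * t) * r) := by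
  rw [abs_of_nonpos hr, ← Complex.exp_add, Complex.ofReal_neg]
  ring_nf

lemma cexp_neg_mul_abs_mul_cexp_of_nonneg (c t : ℂ) {r : ℝ} (hr : 0 ≤ r) :
    Complex.exp (-(c * |r|)) * Complex.exp (Complex.I * r * t)
      = Complex.exp ((-c + Complex.I * t) * r) := by
  rw [abs_of_nonneg hr, ← Complex.exp_add]
  ring_nf

lemma add_I_mul_re_pos (h : |t.im| < c.re) : 0 < (c + Complex.I * t).re := by
  simpa using (abs_lt.mp h).2

lemma neg_add_I_mul_re_neg (h : |t.im| < c.re) : (-c + Complex.I * t).re < 0 := by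
  simpa using (abs_lt.mp h).1

lemma integrableOn_Iic_cexp_neg_mul_abs_mul_cexp (h : |t.im| < c.re) :
    IntegrableOn (fun r : ℝ => Complex.exp (-(c * |r|)) * Complex.exp (Complex.I * r * t))
      (Iic 0) :=
  (integrableOn_exp_mul_complex_Iic (add_I_mul_re_pos h) 0).congr_fun
    (fun _ hr => (cexp_neg_mul_abs_mul_cexp_of_nonpos c t hr).symm) measurableSet_Iic

lemma integrableOn_Ioi_cexp_neg_mul_abs_mul_cexp (h : |t.im| < c.re) :
    IntegrableOn (fun r : ℝ => Complex.exp (-(c * |r|)) * Complex.exp (Complex.I * r * t))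
      (Ioi 0) :=
  (integrableOn_exp_mul_complex_Ioi (neg_add_I_mul_re_neg h) 0).congr_fun
    (fun _ hr => (cexp_neg_mul_abs_mul_cexp_of_nonneg c t (le_of_lt hr)).symm) measurableSet_Ioi

lemma integrable_cexp_neg_mul_abs_mul_cexp (h : |t.im| < c.re) :
    Integrable fun r : ℝ => Complex.exp (-(c * |r|)) * Complex.exp (Complex.I * r * t) := by
  rw [← integrableOn_univ, ← Iic_union_Ioi (a := (0 : ℝ))]
  exact (integrableOn_Iic_cexp_neg_mul_abs_mul_cexp h).union
    (integrableOn_Ioi_cexp_neg_mul_abs_mul_cexp h)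

lemma integral_cexp_neg_mul_abs_mul_cexp (h : |t.im| < c.re) :
    ∫ r : ℝ, Complex.exp (-(c * |r|)) * Complex.exp (Complex.I * r * t)
      = 2 * c / (c ^ 2 + t ^ 2) := by
  have hpos := add_I_mul_re_pos h
  have hneg := neg_add_I_mul_re_neg h
  have hpos_ne : c + Complex.I * t ≠ 0 := fun h0 => by simp [h0] at hpos
  have hneg_ne : -c + Complex.I * t ≠ 0 := fun h0 => by simp [h0] at hneg
  have hfactor : c ^ 2 + t ^ 2 = -((c + Complex.I * t) * (-c + Complex.I * t)) := by
    linear_combination t ^ 2 * Complex.I_sq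
  rw [← intervalIntegral.integral_Iic_add_Ioi (integrableOn_Iic_cexp_neg_mul_abs_mul_cexp h)
      (integrableOn_Ioi_cexp_neg_mul_abs_mul_cexp h),
    setIntegral_congr_fun measurableSet_Iic
      fun _ hr => cexp_neg_mul_abs_mul_cexp_of_nonpos c t hr,
    setIntegral_congr_fun measurableSet_Ioi
      fun _ hr => cexp_neg_mul_abs_mul_cexp_of_nonneg c t (le_of_lt hr),
    integral_exp_mul_complex_Iic hpos, integral_exp_mul_complex_Ioi hneg, hfactor]
  simp only [Complex.ofReal_zero, mul_zero, Complex.exp_zero]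
  field_simp
  ring

lemma integral_exp_neg_mul_abs {c : ℝ} (hc : 0 < c) : ∫ r : ℝ, exp (-(c * |r|)) = 2 / c := by
  rw [integral_comp_abs (f := fun r => exp (-(c * r)))]
  simp_rw [← neg_mul]
  rw [integral_exp_mul_Ioi (neg_lt_zero.mpr hc)]
  simp [div_eq_mul_inv]

end TwoSidedExponential

section Mixture

variable {α : Type*} {mα : MeasurableSpace α} {μ : Measure α} [SFinite μ] {c : α → ℝ} {w : α → ℂ}

lemma integrable_prod_mul_cexp_neg_mul_abs_mul_cexp (hc : AEMeasurable c μ)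
    (hc_pos : ∀ᵐ a ∂μ, 0 < c a) (hwc : Integrable (fun a => w a / c a) μ) (t : ℝ) :
    Integrable (Function.uncurry fun (r : ℝ) (a : α) =>
      w a * (Complex.exp (-(c a * |r|)) * Complex.exp (Complex.I * r * t))) (volume.prod μ) := by
  have hmeas : AEStronglyMeasurable (Function.uncurry fun (r : ℝ) (a : α) =>
      w a * (Complex.exp (-(c a * |r|)) * Complex.exp (Complex.I * r * t))) (volume.prod μ) := by
    have hw : AEStronglyMeasurable w μ := by
      refine (hwc.aestronglyMeasurable.mul
        (Complex.measurable_ofReal.comp_aemeasurable hc).aestronglyMeasurable).congr ?_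
      filter_upwards [hc_pos] with a ha
      exact div_mul_cancel₀ _ (Complex.ofReal_ne_zero.mpr ha.ne')
    have hexp : AEMeasurable (fun p : ℝ × α =>
        Complex.exp (-(c p.2 * |p.1|)) * Complex.exp (Complex.I * p.1 * t)) (volume.prod μ) := by
      fun_prop
    exact hw.comp_snd.fun_mul hexp.aestronglyMeasurable
  refine (integrable_prod_iff' hmeas).mpr ⟨?_, ?_⟩
  · filter_upwards [hc_pos] with a ha
    have hrate : |(t : ℂ).im| < (c a : ℂ).re := by simpa using ha
    exact (integrable_cexp_neg_mul_abs_mul_cexp hrate).const_mul (w a)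
  · refine (hwc.norm.const_mul 2).congr ?_
    filter_upwards [hc_pos] with a ha
    have hnorm (r : ℝ) :
        ‖w a * (Complex.exp (-(c a * |r|)) * Complex.exp (Complex.I * r * t))‖
          = ‖w a‖ * exp (-(c a * |r|)) := by
      simp [Complex.norm_exp]
    simp only [Function.uncurry_apply_pair, hnorm]
    rw [integral_const_mul, integral_exp_neg_mul_abs ha, norm_div, Complex.norm_real,
      norm_of_nonneg ha.le]
    ring

theorem integral_mixture_exp_neg_mul_abs_mul_cexp (hc : AEMeasurable c μ)
    (hc_pos : ∀ᵐ a ∂μ, 0 < c a) (hwc : Integrable (fun a => w a / c a) μ) (t : ℝ) :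
    ∫ r : ℝ, (∫ a, w a * Complex.exp (-(c a * |r|)) ∂μ) * Complex.exp (Complex.I * r * t)
      = ∫ a, w a * (2 * c a / (c a ^ 2 + t ^ 2)) ∂μ := by
  simp_rw [← integral_mul_const, mul_assoc (w _)]
  rw [integral_integral_swap
    (integrable_prod_mul_cexp_neg_mul_abs_mul_cexp hc hc_pos hwc t)]
  refine integral_congr_ae ?_
  filter_upwards [hc_pos] with a ha
  rw [integral_const_mul, integral_cexp_neg_mul_abs_mul_cexp (by simpa using ha)]

end Mixture

theorem integral_expIntegralE_abs_div_mul_cexp {n : ℕ} (hn : n ≠ 0) {θ : ℝ} (hθ : 0 < θ) (t : ℝ) :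
    ∫ r : ℝ, (expIntegralE n (|r| / θ) : ℂ) * Complex.exp (Complex.I * r * t)
      = ((∫ u in Ioi (1 : ℝ), (u ^ n)⁻¹ * (2 * (u / θ) / ((u / θ) ^ 2 + t ^ 2)) : ℝ) : ℂ) := by
  have hpos : ∀ᵐ u ∂volume.restrict (Ioi (1 : ℝ)), 0 < u / θ := by
    filter_upwards [ae_restrict_mem measurableSet_Ioi] with u (hu : 1 < u)
    positivity
  have hweight : IntegrableOn (fun u : ℝ => (u ^ n)⁻¹ / (u / θ)) (Ioi 1) := by
    have hpow : IntegrableOn (fun u : ℝ => θ * u ^ (-(n + 1 : ℕ) : ℝ)) (Ioi 1) :=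
      (integrableOn_Ioi_rpow_of_lt (by simpa using Nat.pos_of_ne_zero hn) one_pos).const_mul θ
    refine hpow.congr_fun (fun u (hu : 1 < u) => ?_) measurableSet_Ioi
    have hu0 : 0 < u := zero_lt_one.trans hu
    simp only [rpow_neg hu0.le, rpow_natCast, pow_succ]
    field_simp
  have hmixture (r : ℝ) : (expIntegralE n (|r| / θ) : ℂ)
      = ∫ u in Ioi (1 : ℝ), (((u ^ n)⁻¹ : ℝ) : ℂ) * Complex.exp (-((u / θ : ℝ) * |r|)) := by
    rw [expIntegralE, ← integral_complex_ofReal]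
    congr with u
    push_cast
    ring_nf
  simp_rw [hmixture]
  rw [integral_mixture_exp_neg_mul_abs_mul_cexp (by fun_prop) hpos
      (by exact_mod_cast hweight.ofReal (𝕜 := ℂ)),
    ← integral_complex_ofReal]
  push_cast
  rfl

lemma integral_Ioi_two_mul_div_mul_sq_add {b s : ℝ} (hb : 0 < b) (hs : 0 ≤ s) :
    ∫ u in Ioi b, 2 * s / (u * (u ^ 2 + s)) = log (1 + s / b ^ 2) := by
  have hderiv : ∀ u ∈ Ici b,
      HasDerivAt (fun u => -log (1 + s / u ^ 2)) (2 * s / (u * (u ^ 2 + s))) u := by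
    intro u (hu : b ≤ u)
    have hu0 : 0 < u := hb.trans_le hu
    have hinner : HasDerivAt (fun u => 1 + s / u ^ 2) (s * (-(2 * u) / (u ^ 2) ^ 2)) u := by
      simpa [div_eq_mul_inv] using
        (((hasDerivAt_pow 2 u).fun_inv (by positivity)).const_mul s).const_add 1
    refine (hinner.log (by positivity)).fun_neg.congr_deriv ?_
    field_simp
  have hlim : Tendsto (fun u => -log (1 + s / u ^ 2)) atTop (𝓝 0) := by
    have hinner : Tendsto (fun u : ℝ => 1 + s / u ^ 2) atTop (𝓝 1) := by
      simpa using ((tendsto_pow_atTop two_ne_zero).const_div_atTop s).const_add 1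
    simpa using (hinner.log one_ne_zero).neg
  have hnonneg : ∀ u ∈ Ioi b, 0 ≤ 2 * s / (u * (u ^ 2 + s)) := by
    intro u (hu : b < u)
    have hu0 : 0 < u := hb.trans hu
    positivity
  rw [integral_Ioi_of_hasDerivAt_of_nonneg' hderiv hnonneg hlim, sub_neg_eq_add, zero_add]

/-- Equation (12): the Fourier transform of the Polya kernel constructed from the
exponential distribution with scale `θ`, namely
`k(r) = e^{-|r|/θ} - (|r|/θ) E₁(|r|/θ)` (with `k 0 = 1`), is
`log(1 + θ²t²)/(θ t²)` for `t ≠ 0`. -/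
theorem polya_kernel_exponential_fourier (θ : ℝ) (hθ : 0 < θ)
    (k : ℝ → ℝ) (hk0 : k 0 = 1)
    (hk : ∀ r : ℝ, r ≠ 0 →
      k r = Real.exp (-(|r| / θ)) - (|r| / θ) * expIntegralE1 (|r| / θ))
    (t : ℝ) (ht : t ≠ 0) :
    ∫ r : ℝ, (k r : ℂ) * Complex.exp (Complex.I * r * t)
      = ((Real.log (1 + θ ^ 2 * t ^ 2) / (θ * t ^ 2) : ℝ) : ℂ) := by
  have hk_ae : ∀ᵐ r : ℝ, k r = expIntegralE 2 (|r| / θ) := by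
    filter_upwards [Measure.ae_ne volume 0] with r hr
    rw [hk r hr, expIntegralE_two (by positivity)]
  have hintegrand : EqOn (fun u : ℝ => (u ^ 2)⁻¹ * (2 * (u / θ) / ((u / θ) ^ 2 + t ^ 2)))
      (fun u => 2 * (θ ^ 2 * t ^ 2) / (u * (u ^ 2 + θ ^ 2 * t ^ 2)) / (θ * t ^ 2)) (Ioi 1) := by
    intro u (hu : 1 < u)
    simp only
    field_simp
  calc ∫ r : ℝ, (k r : ℂ) * Complex.exp (Complex.I * r * t)
    _ = ∫ r : ℝ, (expIntegralE 2 (|r| / θ) : ℂ) * Complex.exp (Complex.I * r * t) :=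
      integral_congr_ae (hk_ae.mono fun r hr => by simp only [hr])
    _ = ((∫ u in Ioi (1 : ℝ), (u ^ 2)⁻¹ * (2 * (u / θ) / ((u / θ) ^ 2 + t ^ 2)) : ℝ) : ℂ) :=
      integral_expIntegralE_abs_div_mul_cexp two_ne_zero hθ t
    _ = ((log (1 + θ ^ 2 * t ^ 2) / (θ * t ^ 2) : ℝ) : ℂ) := by
      rw [setIntegral_congr_fun measurableSet_Ioi hintegrand, integral_div,
        integral_Ioi_two_mul_div_mul_sq_add one_pos (by positivity), one_pow, div_one]
end

section
/- For σ > 0, define k : ℝ → ℝ by k(r) = erfc(|r|/(σ√2)) − (1/√π)(|r|/(σ√2)) E₁(r²/(2σ²)) for r ≠ 0 and k(0) = 1, where erfc(x) = (2/√π) ∫_x^∞ e^{−t²} dt and E₁(z) = ∫_z^∞ e^{−u}/u du. Then for every t > 0: ∫_ℝ k(r) e^{i r t} dr = (2/(t√π)) ∫₀^∞ E₁(r²) sin(σ√2 · t · r) dr. -/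
open MeasureTheory Real

/-- The complementary error function `erfc(x) = (2/√π) ∫_x^∞ e^{-t²} dt`. -/
noncomputable def erfc (x : ℝ) : ℝ :=
  (2 / Real.sqrt π) * ∫ t in Set.Ioi x, Real.exp (-t ^ 2)

/-!
An even function `r ↦ g |r|` has Fourier integral `2 ∫₀^∞ g(r) cos(t r) dr`, and integration by
parts turns this into `-(2/t) ∫₀^∞ g'(r) sin(t r) dr` as soon as `g` and `g'` are integrable on
`(0, ∞)`. For the half-normal kernel the derivatives of `erfc` and of `E₁` cancel and leave only
`-E₁(x²)/√π`. Integrability of `erfc` and `E₁`, even against powers of `x`, is Tonelli's theorem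
for tail integrals: `∫₀^∞ x^s ∫_x^∞ |f(u)| du dx = ∫₀^∞ u^(s+1) |f(u)| du / (s+1)`.
-/

open Filter Set Topology

section TailIntegrals

variable {E : Type*} [NormedAddCommGroup E] [NormedSpace ℝ E]

theorem hasDerivAt_integral_Ioi [CompleteSpace E] {f : ℝ → E} {a x : ℝ}
    (hf : IntegrableOn f (Ioi a)) (hax : a < x) (hfx : ContinuousAt f x) :
    HasDerivAt (fun y ↦ ∫ u in Ioi y, f u) (-f x) x := by
  have hint : IntervalIntegrable f volume a x :=
    (intervalIntegrable_iff_integrableOn_Ioc_of_le hax.le).2 (hf.mono_set Ioc_subset_Ioi_self)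
  have hmeas : StronglyMeasurableAtFilter f (𝓝 x) :=
    ⟨Ioi a, Ioi_mem_nhds hax, hf.aestronglyMeasurable⟩
  refine ((intervalIntegral.integral_hasDerivAt_right hint hmeas hfx).const_sub
    (∫ u in Ioi a, f u)).congr_of_eventuallyEq ?_
  filter_upwards [Ioi_mem_nhds hax] with y hy
  rw [← intervalIntegral.integral_Ioi_sub_Ioi hf (le_of_lt hy), sub_sub_cancel]

theorem tendsto_nhdsGT_of_hasDerivAt_of_integrableOn_Ioi [CompleteSpace E] {f f' : ℝ → E}
    {a : ℝ} {m : E} (hderiv : ∀ x ∈ Ioi a, HasDerivAt f (f' x) x)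
    (hf' : IntegrableOn f' (Ioi a)) (hm : Tendsto f atTop (𝓝 m)) :
    Tendsto f (𝓝[>] a) (𝓝 (m - ∫ x in Ioi a, f' x)) := by
  have htail : Tendsto (fun b ↦ ∫ x in Ioi b, f' x) (𝓝[>] a) (𝓝 (∫ x in Ioi a, f' x)) :=
    (hf'.continuousOn_Ici_primitive_Ioi a self_mem_Ici).mono Ioi_subset_Ici_self
  refine (htail.const_sub m).congr' ?_
  filter_upwards [self_mem_nhdsWithin] with b hb
  rw [integral_Ioi_of_hasDerivAt_of_tendsto' (fun x hx ↦ hderiv x (hb.out.trans_le hx))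
    (hf'.mono_set (Ioi_subset_Ioi (le_of_lt hb))) hm, sub_sub_cancel]

theorem integral_Ioo_zero_rpow {s u : ℝ} (hs : -1 < s) (hu : 0 ≤ u) :
    ∫ x in Ioo 0 u, x ^ s = u ^ (s + 1) / (s + 1) := by
  rw [← integral_Ioc_eq_integral_Ioo, ← intervalIntegral.integral_of_le hu,
    integral_rpow (Or.inl hs), Real.zero_rpow (by linarith), sub_zero]

theorem aestronglyMeasurable_of_rpow_smul {f : ℝ → E} {p : ℝ}
    (hf : AEStronglyMeasurable (fun u ↦ u ^ p • f u) (volume.restrict (Ioi 0))) :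
    AEStronglyMeasurable f (volume.restrict (Ioi 0)) := by
  have hinv : Measurable fun u : ℝ ↦ u ^ (-p) := by fun_prop
  refine (hinv.aestronglyMeasurable.smul hf).congr ?_
  filter_upwards [ae_restrict_mem measurableSet_Ioi] with u hu
  rw [Pi.smul_apply', smul_smul, ← rpow_add hu, neg_add_cancel, rpow_zero, one_smul]

theorem integrableOn_rpow_smul_integral_Ioi {f : ℝ → E} {s : ℝ} (hs : -1 < s)
    (hf : IntegrableOn (fun u ↦ u ^ (s + 1) • f u) (Ioi 0)) :
    IntegrableOn (fun x ↦ x ^ s • ∫ u in Ioi x, f u) (Ioi 0) := by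
  set μ := volume.restrict (Ioi (0 : ℝ))
  let F : ℝ × ℝ → E := {p | p.1 < p.2}.indicator fun p ↦ p.1 ^ s • f p.2
  have hF_meas : AEStronglyMeasurable F (μ.prod μ) := by
    have hpow : Measurable fun p : ℝ × ℝ ↦ p.1 ^ s := by fun_prop
    exact (hpow.aestronglyMeasurable.smul
      (aestronglyMeasurable_of_rpow_smul hf.aestronglyMeasurable).comp_snd).indicator
        (measurableSet_lt measurable_fst measurable_snd)
  have hF_slice (u : ℝ) : (fun x ↦ F (x, u)) = (Iio u).indicator fun x ↦ x ^ s • f u := rfl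
  have hF_slice_int : ∀ u ∈ Ioi (0 : ℝ), Integrable (fun x ↦ F (x, u)) μ := by
    intro u hu
    have hpow : IntegrableOn (fun x : ℝ ↦ x ^ s) (Ioo 0 u) :=
      (intervalIntegral.integrableOn_Ioo_rpow_iff hu).2 hs
    rw [hF_slice, integrable_indicator_iff measurableSet_Iio, IntegrableOn,
      Measure.restrict_restrict measurableSet_Iio, Iio_inter_Ioi]
    exact Integrable.smul_const hpow (f u)
  have hF_norm : ∀ u ∈ Ioi (0 : ℝ), ‖u ^ (s + 1) • f u‖ / (s + 1) = ∫ x, ‖F (x, u)‖ ∂μ := by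
    intro u (hu : 0 < u)
    calc ‖u ^ (s + 1) • f u‖ / (s + 1) = (∫ x in Ioo 0 u, x ^ s) * ‖f u‖ := by
          rw [integral_Ioo_zero_rpow hs hu.le, norm_smul, norm_of_nonneg (rpow_nonneg hu.le _)]
          ring
      _ = ∫ x in Ioo 0 u, ‖x ^ s • f u‖ := by
          rw [← integral_mul_const]
          refine setIntegral_congr_fun measurableSet_Ioo fun x hx ↦ ?_
          simp only [norm_smul, norm_of_nonneg (rpow_nonneg hx.1.le s)]
      _ = ∫ x, ‖F (x, u)‖ ∂μ := by
          rw [← Ioi_inter_Iio, ← setIntegral_indicator measurableSet_Iio]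
          simp_rw [← norm_indicator_eq_indicator_norm, ← hF_slice]
          rfl
  have hF : Integrable F (μ.prod μ) := by
    have hpos : ∀ᵐ u ∂μ, u ∈ Ioi 0 := ae_restrict_mem measurableSet_Ioi
    exact (integrable_prod_iff' hF_meas).2
      ⟨hpos.mono hF_slice_int, (hf.norm.div_const (s + 1)).congr (hpos.mono hF_norm)⟩
  refine hF.integral_prod_left.congr ?_
  filter_upwards [ae_restrict_mem measurableSet_Ioi] with x hx
  calc ∫ u, F (x, u) ∂μ = ∫ u in Ioi 0, (Ioi x).indicator (fun u ↦ x ^ s • f u) u := rfl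
    _ = x ^ s • ∫ u in Ioi x, f u := by
      rw [setIntegral_indicator measurableSet_Ioi, Ioi_inter_Ioi, max_eq_right (le_of_lt hx),
        integral_smul]

end TailIntegrals

section FourierIntegralsOfEvenFunctions

theorem integral_comp_abs_mul_cexp {g : ℝ → ℝ} (hg : IntegrableOn g (Ioi 0)) (t : ℝ) :
    ∫ r : ℝ, (g |r| : ℂ) * Complex.exp (Complex.I * r * t)
      = ((2 * ∫ r in Ioi (0 : ℝ), g r * Real.cos (t * r) : ℝ) : ℂ) := by
  set F : ℝ → ℂ := fun r ↦ (g |r| : ℂ) * Complex.exp (Complex.I * r * t)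
  have hg_abs : Integrable fun r : ℝ ↦ g |r| := by
    simpa using (integrable_fun_norm_addHaar (volume : Measure ℝ) (f := g)).2 (by simpa using hg)
  have hF : Integrable F := by
    refine hg_abs.ofReal.mul_bdd (c := 1) (by fun_prop) (ae_of_all _ fun r ↦ ?_)
    rw [mul_assoc, ← Complex.ofReal_mul, Complex.norm_exp_I_mul_ofReal]
  have hF_symm (r : ℝ) : F r + F (-r) = ((2 * (g |r| * Real.cos (t * |r|)) : ℝ) : ℂ) := by
    have hcos : Real.cos (t * |r|) = Real.cos (t * r) := by
      rw [← Real.cos_abs, abs_mul, abs_abs, ← abs_mul, Real.cos_abs]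
    simp only [F, abs_neg, hcos]
    push_cast
    rw [mul_left_comm, Complex.two_cos]
    ring_nf
  have hF_neg : ∫ r, F (-r) = ∫ r, F r := integral_neg_eq_self F volume
  have hF_two : 2 * ∫ r, F r = 2 * ((2 * ∫ r in Ioi (0 : ℝ), g r * Real.cos (t * r) : ℝ) : ℂ) :=
    calc 2 * ∫ r, F r = ∫ r, (F r + F (-r)) := by
          rw [integral_add hF hF.comp_neg, hF_neg, two_mul]
      _ = ((2 * ∫ r : ℝ, g |r| * Real.cos (t * |r|) : ℝ) : ℂ) := by
          simp_rw [hF_symm, integral_complex_ofReal, integral_const_mul]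
      _ = _ := by
          rw [integral_comp_abs (f := fun r ↦ g r * Real.cos (t * r))]
          push_cast
          ring
  exact mul_left_cancel₀ two_ne_zero hF_two

theorem integral_Ioi_mul_cos_of_hasDerivAt {g g' : ℝ → ℝ} {t : ℝ} (ht : t ≠ 0)
    (hderiv : ∀ x ∈ Ioi (0 : ℝ), HasDerivAt g (g' x) x) (hg : IntegrableOn g (Ioi 0))
    (hg' : IntegrableOn g' (Ioi 0)) :
    ∫ x in Ioi (0 : ℝ), g x * Real.cos (t * x)
      = -(1 / t) * ∫ x in Ioi (0 : ℝ), g' x * Real.sin (t * x) := by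
  have hsin : ∀ x ∈ Ioi (0 : ℝ),
      HasDerivAt (fun x ↦ Real.sin (t * x) / t) (Real.cos (t * x)) x := by
    intro x _
    have := (((hasDerivAt_id x).const_mul t).sin).div_const t
    simpa [ht] using this
  have hsin_bdd (x : ℝ) : ‖Real.sin (t * x) / t‖ ≤ 1 / |t| := by
    rw [norm_div, norm_eq_abs, norm_eq_abs]
    gcongr
    exact abs_sin_le_one _
  have hg_top : Tendsto g atTop (𝓝 0) :=
    tendsto_zero_of_hasDerivAt_of_integrableOn_Ioi hderiv hg' hg
  have hbdry_zero : Tendsto (g * fun x ↦ Real.sin (t * x) / t) (𝓝[>] 0) (𝓝 0) := by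
    have hsin_zero : Tendsto (fun x ↦ Real.sin (t * x) / t) (𝓝[>] 0) (𝓝 0) := by
      have : Continuous fun x ↦ Real.sin (t * x) / t := by fun_prop
      simpa using (this.tendsto 0).mono_left nhdsWithin_le_nhds
    have h := (tendsto_nhdsGT_of_hasDerivAt_of_integrableOn_Ioi hderiv hg' hg_top).mul hsin_zero
    rwa [mul_zero] at h
  have hbdry_top : Tendsto (g * fun x ↦ Real.sin (t * x) / t) atTop (𝓝 0) :=
    hg_top.zero_mul_isBoundedUnder_le (isBoundedUnder_of ⟨1 / |t|, hsin_bdd⟩)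
  rw [integral_Ioi_mul_deriv_eq_deriv_mul hderiv hsin
    (hg.mul_bdd (by fun_prop) (ae_of_all _ fun x ↦ abs_cos_le_one (t * x)))
    (hg'.mul_bdd (by fun_prop) (ae_of_all _ hsin_bdd)) hbdry_zero hbdry_top,
    sub_zero, zero_sub, ← integral_neg, ← integral_const_mul]
  congr with x
  ring

theorem integral_comp_abs_mul_cexp_of_hasDerivAt {g g' : ℝ → ℝ} {t : ℝ} (ht : t ≠ 0)
    (hderiv : ∀ x ∈ Ioi (0 : ℝ), HasDerivAt g (g' x) x) (hg : IntegrableOn g (Ioi 0))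
    (hg' : IntegrableOn g' (Ioi 0)) :
    ∫ r : ℝ, (g |r| : ℂ) * Complex.exp (Complex.I * r * t)
      = ((-(2 / t) * ∫ r in Ioi (0 : ℝ), g' r * Real.sin (t * r) : ℝ) : ℂ) := by
  rw [integral_comp_abs_mul_cexp hg, integral_Ioi_mul_cos_of_hasDerivAt ht hderiv hg hg']
  congr 1
  ring

end FourierIntegralsOfEvenFunctions

section ExponentialIntegral

theorem integrableOn_exp_neg_div_Ioi {z : ℝ} (hz : 0 < z) :
    IntegrableOn (fun u ↦ Real.exp (-u) / u) (Ioi z) := by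
  refine ((integrableOn_exp_neg_Ioi z).div_const z).mono'
    (Measurable.aestronglyMeasurable (by fun_prop)) ?_
  filter_upwards [ae_restrict_mem measurableSet_Ioi] with u (hu : z < u)
  rw [norm_of_nonneg (div_nonneg (exp_nonneg _) (hz.trans hu).le)]
  gcongr

theorem hasDerivAt_expIntegralE1 {z : ℝ} (hz : 0 < z) :
    HasDerivAt expIntegralE1 (-(Real.exp (-z) / z)) z :=
  hasDerivAt_integral_Ioi (integrableOn_exp_neg_div_Ioi (half_pos hz)) (half_lt_self hz)
    (by fun_prop (disch := exact hz.ne'))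

theorem integrableOn_rpow_mul_expIntegralE1 {s : ℝ} (hs : -1 < s) :
    IntegrableOn (fun z ↦ z ^ s * expIntegralE1 z) (Ioi 0) := by
  refine integrableOn_rpow_smul_integral_Ioi hs
    ((integrableOn_rpow_mul_exp_neg_rpow hs one_pos).congr_fun (fun u hu ↦ ?_) measurableSet_Ioi)
  have hu : u ≠ 0 := ne_of_gt hu
  simp only [rpow_one, smul_eq_mul, rpow_add_one hu]
  field_simp

theorem integrableOn_rpow_mul_expIntegralE1_sq {s : ℝ} (hs : -1 < s) :
    IntegrableOn (fun x ↦ x ^ s * expIntegralE1 (x ^ 2)) (Ioi 0) := by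
  have hint := integrableOn_rpow_mul_expIntegralE1 (s := (s - 1) / 2) (by linarith)
  refine ((integrableOn_Ioi_comp_rpow_iff' _ two_ne_zero).2 hint).congr_fun
    (fun x hx ↦ ?_) measurableSet_Ioi
  have hpow : x ^ ((2 : ℝ) - 1) * (x ^ (2 : ℝ)) ^ ((s - 1) / 2) = x ^ s := by
    rw [← rpow_mul (le_of_lt hx), ← rpow_add hx]
    ring_nf
  simp only [smul_eq_mul, ← mul_assoc, hpow]
  rw [rpow_two]

theorem integrableOn_expIntegralE1_sq : IntegrableOn (fun x ↦ expIntegralE1 (x ^ 2)) (Ioi 0) := by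
  simpa using integrableOn_rpow_mul_expIntegralE1_sq (s := 0) (by norm_num)

end ExponentialIntegral

section ErrorFunction

theorem hasDerivAt_erfc (x : ℝ) : HasDerivAt erfc (-(2 / √π) * Real.exp (-x ^ 2)) x := by
  have hint : IntegrableOn (fun t : ℝ ↦ Real.exp (-t ^ 2)) (Ioi (x - 1)) := by
    simpa using (integrable_exp_neg_mul_sq one_pos).integrableOn
  have h := (hasDerivAt_integral_Ioi hint (sub_one_lt x) (by fun_prop)).const_mul (2 / √π)
  rwa [mul_neg, ← neg_mul] at h

theorem integrableOn_rpow_mul_erfc {s : ℝ} (hs : -1 < s) :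
    IntegrableOn (fun x ↦ x ^ s * erfc x) (Ioi 0) := by
  have hint : IntegrableOn (fun u : ℝ ↦ u ^ (s + 1) * Real.exp (-u ^ 2)) (Ioi 0) := by
    simpa using integrableOn_rpow_mul_exp_neg_mul_sq one_pos (s := s + 1) (by linarith)
  refine IntegrableOn.congr_fun ((integrableOn_rpow_smul_integral_Ioi hs hint).const_mul (2 / √π))
    (fun x _ ↦ ?_) measurableSet_Ioi
  exact mul_left_comm _ _ _

end ErrorFunction

section HalfNormalPolyaKernel

/-- The Polya kernel `∫₀^∞ max (0, 1 - |r|/x) f(x) dx` of the half-normal density `f` with scale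
`σ`, in closed form and as a function of the normalized distance `x = |r| / (σ√2)`. -/
noncomputable def halfNormalPolyaProfile (x : ℝ) : ℝ :=
  erfc x - 1 / √π * x * expIntegralE1 (x ^ 2)

theorem hasDerivAt_halfNormalPolyaProfile {x : ℝ} (hx : 0 < x) :
    HasDerivAt halfNormalPolyaProfile (-(1 / √π) * expIntegralE1 (x ^ 2)) x := by
  have hsq : HasDerivAt (fun y : ℝ ↦ y ^ 2) (2 * x) x := by simpa using hasDerivAt_pow 2 x
  have hE1 : HasDerivAt (fun y ↦ expIntegralE1 (y ^ 2))
      (-(Real.exp (-x ^ 2) / x ^ 2) * (2 * x)) x :=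
    HasDerivAt.comp (h₂ := expIntegralE1) (h := fun y ↦ y ^ 2) x
      (hasDerivAt_expIntegralE1 (pow_pos hx 2)) hsq
  have h := (hasDerivAt_erfc x).sub (((hasDerivAt_id x).const_mul (1 / √π)).mul hE1)
  refine HasDerivAt.congr_deriv h ?_
  simp only [id]
  field_simp
  ring

theorem integrableOn_halfNormalPolyaProfile : IntegrableOn halfNormalPolyaProfile (Ioi 0) := by
  have hE1 := (integrableOn_rpow_mul_expIntegralE1_sq (s := 1) (by norm_num)).const_mul (1 / √π)
  have herfc := integrableOn_rpow_mul_erfc (s := 0) (by norm_num)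
  simp only [rpow_zero, one_mul, rpow_one, ← mul_assoc] at herfc hE1
  exact herfc.sub hE1

theorem polya_kernel_half_normal_fourier_general {s t : ℝ} (hs : 0 < s) (ht : t ≠ 0) :
    ∫ r : ℝ, (halfNormalPolyaProfile (|r| / s) : ℂ) * Complex.exp (Complex.I * r * t)
      = ((2 / (t * √π) *
          ∫ r in Ioi (0 : ℝ), expIntegralE1 (r ^ 2) * Real.sin (s * t * r) : ℝ) : ℂ) := by
  have hderiv : ∀ r ∈ Ioi (0 : ℝ), HasDerivAt (fun r ↦ halfNormalPolyaProfile (r / s))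
      (-(1 / √π) * expIntegralE1 ((r / s) ^ 2) * (1 / s)) r := fun r hr ↦
    (hasDerivAt_halfNormalPolyaProfile (div_pos hr hs)).comp (h := fun r ↦ r / s) r
      ((hasDerivAt_id r).div_const s)
  have hint {f : ℝ → ℝ} (hf : IntegrableOn f (Ioi 0)) :
      IntegrableOn (fun r ↦ f (r / s)) (Ioi 0) := by
    simp only [div_eq_mul_inv]
    rwa [integrableOn_Ioi_comp_mul_right_iff f 0 (inv_pos.2 hs), zero_mul]
  have hsubst : ∫ r in Ioi 0, expIntegralE1 ((r / s) ^ 2) * Real.sin (t * r)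
      = s * ∫ r in Ioi 0, expIntegralE1 (r ^ 2) * Real.sin (s * t * r) := by
    have h := integral_comp_mul_left_Ioi'
      (fun r ↦ expIntegralE1 ((r / s) ^ 2) * Real.sin (t * r)) 0 hs
    simp only [mul_zero, mul_div_cancel_left₀ _ hs.ne', smul_eq_mul, mul_left_comm t s] at h
    simp only [← h, mul_assoc]
  rw [integral_comp_abs_mul_cexp_of_hasDerivAt ht hderiv (hint integrableOn_halfNormalPolyaProfile)
    (((hint integrableOn_expIntegralE1_sq).const_mul _).mul_const _)]
  have hconst (r : ℝ) : -(1 / √π) * expIntegralE1 ((r / s) ^ 2) * (1 / s) * Real.sin (t * r)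
      = -(1 / √π) * (1 / s) * (expIntegralE1 ((r / s) ^ 2) * Real.sin (t * r)) := by ring
  simp only [hconst]
  rw [integral_const_mul, hsubst]
  congr 1
  field_simp

theorem halfNormalPolyaProfile_abs_div (σ r : ℝ) :
    halfNormalPolyaProfile (|r| / (σ * √2))
      = erfc (|r| / (σ * √2))
        - 1 / √π * (|r| / (σ * √2)) * expIntegralE1 (r ^ 2 / (2 * σ ^ 2)) := by
  rw [halfNormalPolyaProfile, div_pow, sq_abs, mul_pow, sq_sqrt zero_le_two, mul_comm (σ ^ 2)]

end HalfNormalPolyaKernel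

/-- Equation (17): the Fourier transform of the Polya kernel constructed from the
half-normal distribution `HN(σ)`, namely
`k(r) = erfc(|r|/(σ√2)) - (1/√π)(|r|/(σ√2)) E₁(r²/(2σ²))` (with `k 0 = 1`), equals
`(2/(t√π)) ∫₀^∞ E₁(r²) sin(σ√2 t r) dr` for `t > 0`. -/
theorem polya_kernel_half_normal_fourier (σ : ℝ) (hσ : 0 < σ)
    (k : ℝ → ℝ) (hk0 : k 0 = 1)
    (hk : ∀ r : ℝ, r ≠ 0 →
      k r = erfc (|r| / (σ * Real.sqrt 2))
        - (1 / Real.sqrt π) * (|r| / (σ * Real.sqrt 2))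
          * expIntegralE1 (r ^ 2 / (2 * σ ^ 2)))
    (t : ℝ) (ht : 0 < t) :
    ∫ r : ℝ, (k r : ℂ) * Complex.exp (Complex.I * r * t)
      = (((2 / (t * Real.sqrt π)) *
          ∫ r in Set.Ioi (0 : ℝ),
            expIntegralE1 (r ^ 2) * Real.sin (σ * Real.sqrt 2 * t * r) : ℝ) : ℂ) := by
  rw [← polya_kernel_half_normal_fourier_general (mul_pos hσ (sqrt_pos.2 two_pos)) ht.ne']
  refine integral_congr_ae ?_
  filter_upwards [Measure.ae_ne volume 0] with r hr
  rw [hk r hr, halfNormalPolyaProfile_abs_div]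
end

section
/- For every σ > 0 and r ≥ 0: ∫₀^∞ max{0, 1 − r/x} · (x/σ²) e^{−x²/(2σ²)} dx = e^{−r²/(2σ²)} − √π · (r/(σ√2)) · erfc(r/(σ√2)), where erfc(x) = (2/√π) ∫_x^∞ e^{−t²} dt is the complementary error function. -/
open MeasureTheory Real

/-!
The factor `max 0 (1 - r / x)` vanishes for `0 < x ≤ r`, and for `x > r` it turns a density of the
form `x g(x)` into `(x - r) g(x)`. So the kernel is the tail first moment of `g` minus `r` times
the tail mass of `g`. The Rayleigh density has this form with `g` Gaussian: its tail first moment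
is elementary and its tail mass is a value of `erfc`.
-/

section PolyaKernel

variable {E : Type*} [NormedAddCommGroup E] [NormedSpace ℝ E] {μ : Measure ℝ} {r : ℝ}

theorem setIntegral_Ioi_max_zero_one_sub_div_smul (hr : 0 ≤ r) (f : ℝ → E) :
    ∫ x in Set.Ioi 0, max 0 (1 - r / x) • f x ∂μ = ∫ x in Set.Ioi r, (1 - r / x) • f x ∂μ := by
  rw [setIntegral_eq_of_subset_of_forall_sdiff_eq_zero measurableSet_Ioi
    (Set.Ioi_subset_Ioi hr)]
  · refine setIntegral_congr_fun measurableSet_Ioi fun x (hx : r < x) => ?_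
    have h_nonneg : 0 ≤ 1 - r / x := sub_nonneg.2 (div_le_one_of_le₀ hx.le (hr.trans hx.le))
    simp only [max_eq_right h_nonneg]
  · rintro x ⟨hx : 0 < x, hxr : ¬r < x⟩
    have h_nonpos : 1 - r / x ≤ 0 := sub_nonpos.2 ((one_le_div hx).2 (not_lt.1 hxr))
    rw [max_eq_left h_nonpos, zero_smul]

theorem setIntegral_Ioi_max_zero_one_sub_div_smul_id_smul {g : ℝ → E} (hr : 0 ≤ r)
    (hg : IntegrableOn g (Set.Ioi r) μ) (hxg : IntegrableOn (fun x => x • g x) (Set.Ioi r) μ) :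
    ∫ x in Set.Ioi 0, max 0 (1 - r / x) • x • g x ∂μ =
      ∫ x in Set.Ioi r, x • g x ∂μ - r • ∫ x in Set.Ioi r, g x ∂μ := by
  rw [setIntegral_Ioi_max_zero_one_sub_div_smul hr, ← integral_smul,
    ← integral_sub hxg (hg.fun_smul r)]
  refine setIntegral_congr_fun measurableSet_Ioi fun x (hx : r < x) => ?_
  have hx0 : x ≠ 0 := (hr.trans_lt hx).ne'
  simp only [smul_smul, ← sub_smul, sub_mul, one_mul, div_mul_cancel₀ r hx0]

end PolyaKernel

section GaussianTail

variable {b : ℝ}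

theorem integral_Ioi_mul_exp_neg_mul_sq (hb : 0 < b) (r : ℝ) :
    ∫ x in Set.Ioi r, x * exp (-b * x ^ 2) = exp (-b * r ^ 2) / (2 * b) := by
  have h_deriv (x : ℝ) :
      HasDerivAt (fun x => -(exp (-b * x ^ 2) / (2 * b))) (x * exp (-b * x ^ 2)) x := by
    refine ((((hasDerivAt_pow 2 x).const_mul (-b)).exp).div_const (2 * b)).neg.congr_deriv ?_
    field_simp
    norm_num [mul_comm]
  have h_lim := tendsto_zero_of_hasDerivAt_of_integrableOn_Ioi (a := r) (fun x _ => h_deriv x)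
    (integrable_mul_exp_neg_mul_sq hb).integrableOn
    ((integrable_exp_neg_mul_sq hb).div_const (2 * b)).neg.integrableOn
  rw [integral_Ioi_of_hasDerivAt_of_tendsto' (fun x _ => h_deriv x)
    (integrable_mul_exp_neg_mul_sq hb).integrableOn h_lim, zero_sub, neg_neg]

theorem integral_Ioi_exp_neg_sq (x : ℝ) :
    ∫ t in Set.Ioi x, exp (-t ^ 2) = √π / 2 * erfc x := by
  rw [erfc]
  field_simp

theorem integral_Ioi_exp_neg_mul_sq (hb : 0 < b) (r : ℝ) :
    ∫ x in Set.Ioi r, exp (-b * x ^ 2) = √(π / b) / 2 * erfc (√b * r) := by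
  calc ∫ x in Set.Ioi r, exp (-b * x ^ 2)
      = ∫ x in Set.Ioi r, exp (-(√b * x) ^ 2) := by simp only [mul_pow, sq_sqrt hb.le, neg_mul]
    _ = (√b)⁻¹ * ∫ t in Set.Ioi (√b * r), exp (-t ^ 2) :=
        integral_comp_mul_left_Ioi (fun t => exp (-t ^ 2)) r (sqrt_pos.2 hb)
    _ = √(π / b) / 2 * erfc (√b * r) := by
        rw [integral_Ioi_exp_neg_sq, sqrt_div pi_pos.le]
        ring

theorem integral_Ioi_max_zero_one_sub_div_mul_mul_exp_neg_mul_sq (hb : 0 < b) {r : ℝ}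
    (hr : 0 ≤ r) :
    ∫ x in Set.Ioi 0, max 0 (1 - r / x) * (x * exp (-b * x ^ 2)) =
      exp (-b * r ^ 2) / (2 * b) - r * (√(π / b) / 2 * erfc (√b * r)) := by
  rw [← integral_Ioi_mul_exp_neg_mul_sq hb, ← integral_Ioi_exp_neg_mul_sq hb]
  exact setIntegral_Ioi_max_zero_one_sub_div_smul_id_smul hr
    (integrable_exp_neg_mul_sq hb).integrableOn (integrable_mul_exp_neg_mul_sq hb).integrableOn

end GaussianTail

/-- Equation (18): the Polya kernel constructed from the Rayleigh distribution with
scale `σ` equals `e^{-r²/(2σ²)} - √π (r/(σ√2)) erfc(r/(σ√2))` for `r ≥ 0`. -/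
theorem polya_kernel_rayleigh (σ : ℝ) (hσ : 0 < σ) (r : ℝ) (hr : 0 ≤ r) :
    ∫ x in Set.Ioi (0 : ℝ),
        max 0 (1 - r / x) * (x / σ ^ 2 * Real.exp (-(x ^ 2 / (2 * σ ^ 2))))
      = Real.exp (-(r ^ 2 / (2 * σ ^ 2)))
        - Real.sqrt π * (r / (σ * Real.sqrt 2)) * erfc (r / (σ * Real.sqrt 2)) := by
  set b : ℝ := 1 / (2 * σ ^ 2) with hb_def
  have hb : 0 < b := by positivity
  have h_sqrt : √b = 1 / (σ * √2) := by
    rw [sqrt_eq_iff_mul_self_eq hb.le (by positivity), hb_def]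
    field_simp
    norm_num
  have h_exp (x : ℝ) : -(x ^ 2 / (2 * σ ^ 2)) = -b * x ^ 2 := by ring
  have h_density (x : ℝ) : max 0 (1 - r / x) * (x / σ ^ 2 * exp (-b * x ^ 2)) =
      2 * b * (max 0 (1 - r / x) * (x * exp (-b * x ^ 2))) := by ring
  have h_arg : √b * r = r / (σ * √2) := by rw [h_sqrt, one_div_mul_eq_div]
  have h_coeff : 2 * b * (r * (√(π / b) / 2)) = √π * (r / (σ * √2)) := by
    rw [← h_arg, sqrt_div pi_pos.le]
    field_simp
    rw [sq_sqrt hb.le, mul_comm]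
  simp only [h_exp, h_density, integral_const_mul]
  rw [integral_Ioi_max_zero_one_sub_div_mul_mul_exp_neg_mul_sq hb hr, ← h_coeff, ← h_arg]
  field_simp
end

section
/- For every scale θ > 0, shape α > 1, and r ≥ 0: ∫₀^∞ max{0, 1 − r/x} · (α/θ)(x/θ)^{α−1} e^{−(x/θ)^α} dx = e^{−(r/θ)^α} − (r/θ) · Γ(1 − 1/α, (r/θ)^α), where Γ(s, t) = ∫_t^∞ u^{s−1} e^{−u} du is the upper incomplete gamma function. -/
/-!
The kernel `max 0 (1 - r / x)` vanishes for `x ≤ r`, so integrating it against a density `f` gives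
`∫_r^∞ f(x) dx - r ∫_r^∞ f(x)/x dx`. For the Weibull density, the substitution `y = (x/θ)^α` turns
`f(x) dx` into `e^{-y} dy` and `1/x` into `θ⁻¹ y^{-1/α}`, so that the first integral is the survival
function and the second is an upper incomplete gamma value.
-/

open MeasureTheory Real

section PolyaKernel

open Set

theorem setIntegral_max_zero_one_sub_div_mul {μ : Measure ℝ} {f : ℝ → ℝ} {r : ℝ} (hr : 0 ≤ r)
    (hf : IntegrableOn f (Ioi r) μ) (hf_div : IntegrableOn (fun x ↦ f x / x) (Ioi r) μ) :
    ∫ x in Ioi 0, max 0 (1 - r / x) * f x ∂μ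
      = (∫ x in Ioi r, f x ∂μ) - r * ∫ x in Ioi r, f x / x ∂μ := by
  have eq_zero_of_le : ∀ x ∈ Ioi 0 \ Ioi r, max 0 (1 - r / x) * f x = 0 := by
    rintro x ⟨hx, hxr⟩
    have : 1 ≤ r / x := (one_le_div hx).2 (not_lt.1 hxr)
    rw [max_eq_left (sub_nonpos.2 this), zero_mul]
  have eq_sub_of_lt : EqOn (fun x ↦ max 0 (1 - r / x) * f x) (fun x ↦ f x - r * (f x / x))
      (Ioi r) := by
    intro x (hx : r < x)
    have : r / x ≤ 1 := div_le_one_of_le₀ hx.le (hr.trans hx.le)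
    simp only [max_eq_right (sub_nonneg.2 this)]
    ring
  calc ∫ x in Ioi 0, max 0 (1 - r / x) * f x ∂μ
      = ∫ x in Ioi r, max 0 (1 - r / x) * f x ∂μ :=
        setIntegral_eq_of_subset_of_forall_sdiff_eq_zero measurableSet_Ioi
          (Ioi_subset_Ioi hr) eq_zero_of_le
    _ = ∫ x in Ioi r, (f x - r * (f x / x)) ∂μ :=
        setIntegral_congr_fun measurableSet_Ioi eq_sub_of_lt
    _ = (∫ x in Ioi r, f x ∂μ) - r * ∫ x in Ioi r, f x / x ∂μ := by
        rw [integral_sub hf (hf_div.const_mul r), integral_const_mul]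

end PolyaKernel

section IncompleteGamma

open Set

theorem integrableOn_rpow_mul_exp_neg_Ioi_of_pos (s : ℝ) {t : ℝ} (ht : 0 < t) :
    IntegrableOn (fun u : ℝ ↦ u ^ (s - 1) * exp (-u)) (Ioi t) := by
  have cont : ContinuousOn (fun u : ℝ ↦ u ^ (s - 1) * exp (-u)) (Ici t) :=
    (continuousOn_id.rpow_const fun u hu ↦ .inl (ht.trans_le hu).ne').mul (by fun_prop)
  refine integrable_of_isBigO_exp_neg one_half_pos cont ?_
  simpa only [mul_comm] using (Gamma_integrand_isLittleO (s - 1)).isBigO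

theorem integrableOn_rpow_mul_exp_neg_Ioi {s t : ℝ} (ht : 0 ≤ t) (hs : t = 0 → 0 < s) :
    IntegrableOn (fun u : ℝ ↦ u ^ (s - 1) * exp (-u)) (Ioi t) := by
  rcases ht.eq_or_lt with rfl | ht
  · simpa only [mul_comm] using GammaIntegral_convergent (hs rfl)
  · exact integrableOn_rpow_mul_exp_neg_Ioi_of_pos s ht

end IncompleteGamma

section Weibull

open Set

/-- The density of the Weibull distribution with scale `θ` and shape `α`, by its formula on
`(0, ∞)`. It is not cut off to zero at negative arguments, where it is never evaluated. -/
noncomputable def weibullPDFReal (θ α x : ℝ) : ℝ :=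
  α / θ * (x / θ) ^ (α - 1) * exp (-((x / θ) ^ α))

variable {θ α r : ℝ} {E : Type*} [NormedAddCommGroup E] [NormedSpace ℝ E]

theorem strictMonoOn_div_rpow (hθ : 0 < θ) (hα : 0 < α) :
    StrictMonoOn (fun x : ℝ ↦ (x / θ) ^ α) (Ici 0) := fun _ hx _ _ hxy ↦
  rpow_lt_rpow (div_nonneg hx hθ.le) (div_lt_div_of_pos_right hxy hθ) hα

theorem hasDerivAt_div_rpow (hθ : θ ≠ 0) {x : ℝ} (hx : x ≠ 0) :
    HasDerivAt (fun x : ℝ ↦ (x / θ) ^ α) (α / θ * (x / θ) ^ (α - 1)) x := by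
  convert ((hasDerivAt_id' x).div_const θ).rpow_const (p := α) (.inl (div_ne_zero hx hθ)) using 1
  ring

theorem image_div_rpow_Ioi (hθ : 0 < θ) (hα : 0 < α) (hr : 0 ≤ r) :
    (fun x : ℝ ↦ (x / θ) ^ α) '' Ioi r = Ioi ((r / θ) ^ α) := by
  have cont : Continuous fun x : ℝ ↦ (x / θ) ^ α :=
    (continuous_id.div_const θ).rpow_const fun _ ↦ .inr hα.le
  exact cont.continuousOn.image_Ioi_of_strictMonoOn
    ((strictMonoOn_div_rpow hθ hα).mono (Ici_subset_Ici.2 hr))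
    ((tendsto_rpow_atTop hα).comp (Filter.tendsto_id.atTop_div_const hθ))

theorem hasDerivWithinAt_div_rpow_Ioi (hθ : 0 < θ) (hr : 0 ≤ r) :
    ∀ x ∈ Ioi r, HasDerivWithinAt (fun x : ℝ ↦ (x / θ) ^ α)
      (α / θ * (x / θ) ^ (α - 1)) (Ioi r) x := fun _ hx ↦
  (hasDerivAt_div_rpow hθ.ne' (hr.trans_lt hx).ne').hasDerivWithinAt

theorem monotoneOn_div_rpow_Ioi (hθ : 0 < θ) (hα : 0 < α) (hr : 0 ≤ r) :
    MonotoneOn (fun x : ℝ ↦ (x / θ) ^ α) (Ioi r) :=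
  (strictMonoOn_div_rpow hθ hα).monotoneOn.mono fun _ hx ↦ hr.trans (le_of_lt hx)

theorem integral_weibullPDFReal_smul_comp_Ioi (hθ : 0 < θ) (hα : 0 < α) (hr : 0 ≤ r)
    (g : ℝ → E) :
    ∫ x in Ioi r, weibullPDFReal θ α x • g ((x / θ) ^ α)
      = ∫ y in Ioi ((r / θ) ^ α), exp (-y) • g y := by
  simp only [weibullPDFReal, mul_smul (_ * _), ← image_div_rpow_Ioi hθ hα hr]
  exact (integral_image_eq_integral_deriv_smul_of_monotoneOn measurableSet_Ioi
    (hasDerivWithinAt_div_rpow_Ioi hθ hr) (monotoneOn_div_rpow_Ioi hθ hα hr)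
    fun y ↦ exp (-y) • g y).symm

theorem integrableOn_weibullPDFReal_smul_comp_Ioi_iff (hθ : 0 < θ) (hα : 0 < α) (hr : 0 ≤ r)
    (g : ℝ → E) :
    IntegrableOn (fun x ↦ weibullPDFReal θ α x • g ((x / θ) ^ α)) (Ioi r)
      ↔ IntegrableOn (fun y ↦ exp (-y) • g y) (Ioi ((r / θ) ^ α)) := by
  simp only [weibullPDFReal, mul_smul (_ * _), ← image_div_rpow_Ioi hθ hα hr]
  exact (integrableOn_image_iff_integrableOn_deriv_smul_of_monotoneOn measurableSet_Ioi
    (hasDerivWithinAt_div_rpow_Ioi hθ hr) (monotoneOn_div_rpow_Ioi hθ hα hr)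
    fun y ↦ exp (-y) • g y).symm

theorem integrableOn_weibullPDFReal_Ioi (hθ : 0 < θ) (hα : 0 < α) (hr : 0 ≤ r) :
    IntegrableOn (weibullPDFReal θ α) (Ioi r) := by
  simpa only [smul_eq_mul, mul_one] using
    (integrableOn_weibullPDFReal_smul_comp_Ioi_iff hθ hα hr fun _ ↦ (1 : ℝ)).2
      (by simpa only [smul_eq_mul, mul_one] using integrableOn_exp_neg_Ioi _)

theorem integral_weibullPDFReal_Ioi (hθ : 0 < θ) (hα : 0 < α) (hr : 0 ≤ r) :
    ∫ x in Ioi r, weibullPDFReal θ α x = exp (-((r / θ) ^ α)) := by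
  simpa only [smul_eq_mul, mul_one, integral_exp_neg_Ioi] using
    integral_weibullPDFReal_smul_comp_Ioi hθ hα hr fun _ ↦ (1 : ℝ)

theorem weibullPDFReal_div_self_eqOn (hθ : 0 < θ) (hα : α ≠ 0) (hr : 0 ≤ r) :
    EqOn (fun x ↦ weibullPDFReal θ α x / x)
      (fun x ↦ weibullPDFReal θ α x • (θ⁻¹ * ((x / θ) ^ α) ^ (-(1 / α)))) (Ioi r) := by
  intro x hx
  have hx : 0 < x := hr.trans_lt hx
  have rpow_rpow : ((x / θ) ^ α) ^ (-(1 / α)) = θ / x := by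
    rw [← rpow_mul (by positivity), mul_neg, mul_one_div_cancel hα, rpow_neg_one, inv_div]
  simp only [rpow_rpow, smul_eq_mul]
  field_simp

theorem exp_neg_smul_inv_mul_rpow (θ α y : ℝ) :
    exp (-y) • (θ⁻¹ * y ^ (-(1 / α))) = θ⁻¹ * (y ^ (1 - 1 / α - 1) * exp (-y)) := by
  rw [sub_sub_cancel_left, smul_eq_mul]
  ring

theorem integrableOn_weibullPDFReal_div_self_Ioi (hθ : 0 < θ) (hα : 0 < α) (hr : 0 ≤ r)
    (hrα : r = 0 → 1 < α) :
    IntegrableOn (fun x ↦ weibullPDFReal θ α x / x) (Ioi r) := by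
  have exponent_pos (h : (r / θ) ^ α = 0) : 0 < 1 - 1 / α := by
    have hr0 : r = 0 :=
      (div_eq_zero_iff.1 ((rpow_eq_zero (by positivity) hα.ne').1 h)).resolve_right hθ.ne'
    exact sub_pos.2 ((div_lt_one hα).2 (hrα hr0))
  rw [integrableOn_congr_fun (weibullPDFReal_div_self_eqOn hθ hα.ne' hr) measurableSet_Ioi,
    integrableOn_weibullPDFReal_smul_comp_Ioi_iff hθ hα hr fun y ↦ θ⁻¹ * y ^ (-(1 / α))]
  simp only [exp_neg_smul_inv_mul_rpow]
  exact (integrableOn_rpow_mul_exp_neg_Ioi (by positivity) exponent_pos).const_mul _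

theorem integral_weibullPDFReal_div_self_Ioi (hθ : 0 < θ) (hα : 0 < α) (hr : 0 ≤ r) :
    ∫ x in Ioi r, weibullPDFReal θ α x / x
      = θ⁻¹ * upperIncompleteGamma (1 - 1 / α) ((r / θ) ^ α) := by
  rw [setIntegral_congr_fun measurableSet_Ioi (weibullPDFReal_div_self_eqOn hθ hα.ne' hr),
    integral_weibullPDFReal_smul_comp_Ioi hθ hα hr fun y ↦ θ⁻¹ * y ^ (-(1 / α))]
  simp only [exp_neg_smul_inv_mul_rpow]
  rw [integral_const_mul, upperIncompleteGamma]

end Weibull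

theorem polya_kernel_weibull_general {θ α r : ℝ} (hθ : 0 < θ) (hα : 0 < α) (hr : 0 ≤ r)
    (hrα : r = 0 → 1 < α) :
    ∫ x in Set.Ioi (0 : ℝ),
        max 0 (1 - r / x) * (α / θ * (x / θ) ^ (α - 1) * exp (-((x / θ) ^ α)))
      = exp (-((r / θ) ^ α)) - (r / θ) * upperIncompleteGamma (1 - 1 / α) ((r / θ) ^ α) := by
  calc ∫ x in Set.Ioi (0 : ℝ), max 0 (1 - r / x) * weibullPDFReal θ α x
      = (∫ x in Set.Ioi r, weibullPDFReal θ α x)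
          - r * ∫ x in Set.Ioi r, weibullPDFReal θ α x / x :=
        setIntegral_max_zero_one_sub_div_mul hr (integrableOn_weibullPDFReal_Ioi hθ hα hr)
          (integrableOn_weibullPDFReal_div_self_Ioi hθ hα hr hrα)
    _ = exp (-((r / θ) ^ α)) - (r / θ) * upperIncompleteGamma (1 - 1 / α) ((r / θ) ^ α) := by
        rw [integral_weibullPDFReal_Ioi hθ hα hr, integral_weibullPDFReal_div_self_Ioi hθ hα hr,
          ← mul_assoc, ← div_eq_mul_inv]

/-- Equation (22): the Polya kernel constructed from the Weibull distribution
`Weibull(θ, α)` with scale `θ > 0` and shape `α > 1` equals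
`e^{-(r/θ)^α} - (r/θ) Γ(1 - 1/α, (r/θ)^α)` for `r ≥ 0`. -/
theorem polya_kernel_weibull (θ α : ℝ) (hθ : 0 < θ) (hα : 1 < α) (r : ℝ) (hr : 0 ≤ r) :
    ∫ x in Set.Ioi (0 : ℝ),
        max 0 (1 - r / x)
          * (α / θ * (x / θ) ^ (α - 1) * Real.exp (-((x / θ) ^ α)))
      = Real.exp (-((r / θ) ^ α))
        - (r / θ) * upperIncompleteGamma (1 - 1 / α) ((r / θ) ^ α) :=
  polya_kernel_weibull_general hθ (one_pos.trans hα) hr fun _ ↦ hα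
end

section
/- For every w > 0 and all x, x' ∈ ℝ, the Lebesgue measure of the set {b ∈ [0, w) : ⌊(x − b)/w⌋ = ⌊(x' − b)/w⌋} equals w · max{0, 1 − |x − x'|/w}. In other words, if the offset b is drawn uniformly from [0, w), the probability that x and x' fall in the same bin of the grid {b + m w : m ∈ ℤ} of spacing w equals max{0, 1 − |x − x'|/w}. -/
open MeasureTheory

/-!
The set of offsets that put `x` and `x'` in a common bin is `w`-periodic, so its measure can be
computed over any period in place of `[0, w)`. On `(x - w, x]` the point `x` lies in bin `0`, so
the offsets in question form `(x - w, x] ∩ (x' - w, x']`, an interval of length `w - |x - x'|`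
when this is positive.
-/

open Set

theorem Ioc_sub_inter_Ioc_sub {α : Type*} [AddCommGroup α] [LinearOrder α] [IsOrderedAddMonoid α]
    (w x y : α) : Ioc (x - w) x ∩ Ioc (y - w) y = Ioc (max x y - w) (min x y) := by
  rw [Ioc_inter_Ioc, max_sub_sub_right]

section PeriodicSet

variable {μ : Measure ℝ} [μ.IsAddLeftInvariant] {s : Set ℝ} {T : ℝ}

theorem measure_inter_Ioc_eq_of_periodic (hT : 0 < T) (hs : MeasurableSet s)
    (hper : Function.Periodic (· ∈ s) T) (a c : ℝ) :
    μ (s ∩ Ioc a (a + T)) = μ (s ∩ Ioc c (c + T)) :=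
  (isAddFundamentalDomain_Ioc hT a μ).measure_set_eq (isAddFundamentalDomain_Ioc hT c μ) hs
    fun g => ext fun b => (hper.map_vadd_zmultiples g b).to_iff

theorem measure_inter_Ico_eq_inter_Ioc_of_periodic [NullSingletonClass μ] (hT : 0 < T)
    (hs : MeasurableSet s) (hper : Function.Periodic (· ∈ s) T) (a c : ℝ) :
    μ (s ∩ Ico a (a + T)) = μ (s ∩ Ioc c (c + T)) :=
  (measure_congr ((ae_eq_refl s).inter Ico_ae_eq_Ioc)).trans
    (measure_inter_Ioc_eq_of_periodic hT hs hper a c)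

end PeriodicSet

section Field

variable {K : Type*} [Field K] [LinearOrder K] [FloorRing K]

/-- The offsets `b` for which `x` and `y` fall in the same bin of the grid `{b + m w : m ∈ ℤ}`.
The offset is not confined to `[0, w)`, which makes the set periodic. -/
def sameBinOffsets (w x y : K) : Set K :=
  {b | ⌊(x - b) / w⌋ = ⌊(y - b) / w⌋}

variable [IsStrictOrderedRing K] {w : K}

theorem floor_sub_div_eq_zero_iff (hw : 0 < w) (x b : K) :
    ⌊(x - b) / w⌋ = 0 ↔ b ∈ Ioc (x - w) x := by
  rw [Int.floor_eq_zero_iff, mem_Ico, le_div_iff₀ hw, zero_mul, sub_nonneg, div_lt_one hw,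
    sub_lt_comm, mem_Ioc, and_comm]

theorem floor_sub_add_div (hw : w ≠ 0) (x b : K) :
    ⌊(x - (b + w)) / w⌋ = ⌊(x - b) / w⌋ - 1 := by
  rw [← sub_sub, sub_div, div_self hw, Int.floor_sub_one]

theorem periodic_mem_sameBinOffsets (hw : w ≠ 0) (x y : K) :
    Function.Periodic (· ∈ sameBinOffsets w x y) w := by
  intro b
  simp only [sameBinOffsets, mem_ofPred_eq, floor_sub_add_div hw, sub_left_inj]

theorem sameBinOffsets_inter_Ioc (hw : 0 < w) (x y : K) :
    sameBinOffsets w x y ∩ Ioc (x - w) x = Ioc (x - w) x ∩ Ioc (y - w) y := by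
  ext b
  rw [inter_comm, mem_inter_iff, mem_inter_iff]
  refine and_congr_right fun hb => ?_
  rw [sameBinOffsets, mem_ofPred_eq, (floor_sub_div_eq_zero_iff hw x b).mpr hb, eq_comm,
    floor_sub_div_eq_zero_iff hw]

end Field

theorem measurableSet_sameBinOffsets (w x y : ℝ) : MeasurableSet (sameBinOffsets w x y) :=
  measurableSet_eq_fun (by fun_prop) (by fun_prop)

theorem volume_sameBinOffsets_inter_Ico {w : ℝ} (hw : 0 < w) (x y a : ℝ) :
    volume (sameBinOffsets w x y ∩ Ico a (a + w)) = ENNReal.ofReal (w - |x - y|) := by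
  calc volume (sameBinOffsets w x y ∩ Ico a (a + w))
    _ = volume (sameBinOffsets w x y ∩ Ioc (x - w) (x - w + w)) :=
      measure_inter_Ico_eq_inter_Ioc_of_periodic hw (measurableSet_sameBinOffsets w x y)
        (periodic_mem_sameBinOffsets hw.ne' x y) a (x - w)
    _ = volume (Ioc (max x y - w) (min x y)) := by
      rw [sub_add_cancel, sameBinOffsets_inter_Ioc hw, Ioc_sub_inter_Ioc_sub]
    _ = ENNReal.ofReal (w - |x - y|) := by
      rw [Real.volume_Ioc, ← max_sub_min_eq_abs']
      congr 1
      abel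

theorem ofReal_mul_max_zero_one_sub_div {w : ℝ} (hw : 0 < w) (d : ℝ) :
    ENNReal.ofReal (w * max 0 (1 - d / w)) = ENNReal.ofReal (w - d) := by
  rw [mul_max_of_nonneg _ _ hw.le, mul_zero, mul_one_sub, mul_div_cancel₀ d hw.ne', max_comm,
    ENNReal.ofReal_max, ENNReal.ofReal_zero, max_eq_left zero_le]

/-- For a random grid of spacing `w > 0` with offset `b` uniform on `[0, w)`, the
probability that two points `x, x'` fall into the same bin is
`max 0 (1 - |x - x'|/w)`: the Lebesgue measure of the set of offsets
`b ∈ [0, w)` with `⌊(x - b)/w⌋ = ⌊(x' - b)/w⌋` equals `w * max 0 (1 - |x - x'|/w)`. -/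
theorem random_binning_same_bin_probability (w : ℝ) (hw : 0 < w) (x x' : ℝ) :
    volume {b : ℝ | b ∈ Set.Ico (0 : ℝ) w ∧ ⌊(x - b) / w⌋ = ⌊(x' - b) / w⌋}
      = ENNReal.ofReal (w * max 0 (1 - |x - x'| / w)) := by
  rw [ofReal_mul_max_zero_one_sub_div hw, ← volume_sameBinOffsets_inter_Ico hw x x' 0, zero_add,
    inter_comm]
  rfl
end
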